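/- arXiv:1704.01817 — 8 statements merged into one kernel-verified Lean document; each statement's English description precedes it below -/
import Mathlib

section
/- Generalized Leibniz formula, first form (Theorem 1.1, formula (Rfg)): Let n ≥ 1 and let 𝐩 ∈ ℝ[x₁,…,xₙ]. Let W(𝐩) be the linear span of all partial derivatives ∂^α𝐩 for multi-indices α ∈ ℕⁿ (including α = 0, i.e. 𝐩 itself), let ρ = dim W(𝐩), and let 𝐩₁,…,𝐩_ρ be a basis of W(𝐩) which is orthonormal with respect to the Fischer inner product. For 1 ≤ j ≤ ρ set 𝐩ⱼ^♭ := 𝐩ⱼ(∂)𝐩 ∈ W(𝐩). Then for all smooth functions f, g : ℝⁿ → ℝ one has 𝐩(∂)(f·g) = Σ_{j=1}^{ρ} (𝐩ⱼ^♭(∂)f)·(𝐩ⱼ(∂)g) pointwise on ℝⁿ. -/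
noncomputable section

open MvPolynomial

/-- Partial derivative of a function on `ℝⁿ` in the `i`-th coordinate direction. -/
def pderivFun {n : ℕ} (i : Fin n) (f : (Fin n → ℝ) → ℝ) : (Fin n → ℝ) → ℝ :=
  fun x => fderiv ℝ f x (Pi.single i 1)

/-- `∂^m`, the iterated partial derivative attached to the multi-index `m`. -/
def multiDerivFun {n : ℕ} (m : Fin n →₀ ℕ) (f : (Fin n → ℝ) → ℝ) : (Fin n → ℝ) → ℝ :=
  List.foldr (fun i g => (pderivFun i)^[m i] g) f (List.finRange n)

/-- `p(∂)`, the constant-coefficient differential operator attached to the polynomial `p`. -/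
def polDeriv {n : ℕ} (p : MvPolynomial (Fin n) ℝ) (f : (Fin n → ℝ) → ℝ) : (Fin n → ℝ) → ℝ :=
  fun x => ∑ m ∈ p.support, p.coeff m * multiDerivFun m f x

/-- `∂^m` acting on polynomials. -/
def polyMultiDeriv {n : ℕ} (m : Fin n →₀ ℕ) (p : MvPolynomial (Fin n) ℝ) :
    MvPolynomial (Fin n) ℝ :=
  List.foldr (fun i q => (fun r => MvPolynomial.pderiv i r)^[m i] q) p (List.finRange n)

/-- `q(∂)p`, as a polynomial. -/
def polyApply {n : ℕ} (q p : MvPolynomial (Fin n) ℝ) : MvPolynomial (Fin n) ℝ :=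
  ∑ m ∈ q.support, q.coeff m • polyMultiDeriv m p

/-- The Fischer inner product `(p,q)_F = (p(∂)q)(0)`. -/
def fischer {n : ℕ} (p q : MvPolynomial (Fin n) ℝ) : ℝ :=
  polDeriv p (fun x => MvPolynomial.eval x q) 0

/-- `W(p)`, the linear span of all partial derivatives `∂^α p` (including `p` itself). -/
def Wspace {n : ℕ} (p : MvPolynomial (Fin n) ℝ) : Submodule ℝ (MvPolynomial (Fin n) ℝ) :=
  Submodule.span ℝ (Set.range fun m : Fin n →₀ ℕ => polyMultiDeriv m p)


section Aux
variable {n : ℕ}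

lemma midx_induction {P : (Fin n →₀ ℕ) → Prop} (h0 : P 0)
    (h1 : ∀ m i, P m → P (m + Finsupp.single i 1)) (m : Fin n →₀ ℕ) : P m := by
  have key : ∀ d : ℕ, ∀ m : Fin n →₀ ℕ, ∑ i, m i = d → P m := by
    intro d
    induction d with
    | zero =>
      intro m hm
      have : m = 0 := by
        ext i
        simpa using (Finset.sum_eq_zero_iff.1 hm) i (Finset.mem_univ i)
      rw [this]; exact h0
    | succ d ih =>
      intro m hm
      have : ∃ i, m i ≠ 0 := by
        by_contra! hc
        simp [hc] at hm
      obtain ⟨i, hi⟩ := this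
      have hle : Finsupp.single i 1 ≤ m := by
        rw [Finsupp.single_le_iff]; omega
      have he : m - Finsupp.single i 1 + Finsupp.single i 1 = m := tsub_add_cancel_of_le hle
      rw [← he]
      apply h1
      apply ih
      rw [← he] at hm
      simp only [Finsupp.add_apply, Finset.sum_add_distrib] at hm
      have : ∑ x, (Finsupp.single i 1 : Fin n →₀ ℕ) x = 1 := by
        simp [Finsupp.single_apply]
      omega
  exact key _ m rfl

/-- generic iterated operator -/
def gfold {V : Type*} (T : Fin n → V → V) (m : Fin n →₀ ℕ) (l : List (Fin n)) (v : V) : V :=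
  List.foldr (fun i g => (T i)^[m i] g) v l

lemma iter_inv {V : Type*} (P : V → Prop) (t : V → V) (h : ∀ v, P v → P (t v)) (k : ℕ) (v : V)
    (hv : P v) : P (t^[k] v) := by
  induction k with
  | zero => exact hv
  | succ k ih => rw [Function.iterate_succ_apply']; exact h _ ih

lemma gfold_inv {V : Type*} (P : V → Prop) (T : Fin n → V → V) (h : ∀ i v, P v → P (T i v))
    (m : Fin n →₀ ℕ) (l : List (Fin n)) (v : V) (hv : P v) : P (gfold T m l v) := by
  induction l with
  | nil => exact hv
  | cons a l ih => exact iter_inv P (T a) (h a) _ _ ih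

lemma iter_comm {V : Type*} (P : V → Prop) (t s : V → V) (h : ∀ v, P v → P (t v))
    (hc : ∀ v, P v → s (t v) = t (s v)) (k : ℕ) (v : V) (hv : P v) :
    s (t^[k] v) = t^[k] (s v) := by
  induction k with
  | zero => rfl
  | succ k ih =>
    rw [Function.iterate_succ_apply', Function.iterate_succ_apply', hc _ (iter_inv P t h k v hv), ih]

lemma gfold_comm {V : Type*} (P : V → Prop) (T : Fin n → V → V) (h : ∀ i v, P v → P (T i v))
    (hc : ∀ i j v, P v → T i (T j v) = T j (T i v))
    (m : Fin n →₀ ℕ) (l : List (Fin n)) (i : Fin n) (v : V) (hv : P v) :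
    T i (gfold T m l v) = gfold T m l (T i v) := by
  induction l with
  | nil => rfl
  | cons a l ih =>
    change T i ((T a)^[m a] (gfold T m l v)) = (T a)^[m a] (gfold T m l (T i v))
    rw [← ih]
    exact iter_comm P (T a) (T i) (h a) (fun v hv => hc i a v hv) _ _ (gfold_inv P T h m l v hv)

lemma gfold_notMem {V : Type*} (T : Fin n → V → V)
    (m : Fin n →₀ ℕ) (l : List (Fin n)) (i : Fin n) (hi : i ∉ l) (v : V) :
    gfold T (m + Finsupp.single i 1) l v = gfold T m l v := by
  induction l with
  | nil => rfl
  | cons a l ih =>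
    simp only [List.mem_cons, not_or] at hi
    change (T a)^[(m + Finsupp.single i 1 : Fin n →₀ ℕ) a] (gfold T _ l v) = (T a)^[m a] (gfold T m l v)
    rw [ih hi.2]
    simp [Finsupp.single_apply, hi.1]

lemma gfold_succ {V : Type*} (P : V → Prop) (T : Fin n → V → V) (h : ∀ i v, P v → P (T i v))
    (hc : ∀ i j v, P v → T i (T j v) = T j (T i v))
    (m : Fin n →₀ ℕ) (l : List (Fin n)) (hl : l.Nodup) (i : Fin n) (hi : i ∈ l) (v : V)
    (hv : P v) :
    gfold T (m + Finsupp.single i 1) l v = gfold T m l (T i v) := by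
  induction l with
  | nil => simp at hi
  | cons a l ih =>
    rw [List.nodup_cons] at hl
    change (T a)^[(m + Finsupp.single i 1 : Fin n →₀ ℕ) a] (gfold T _ l v) = (T a)^[m a] (gfold T m l (T i v))
    by_cases hia : i = a
    · subst hia
      rw [gfold_notMem T m l i hl.1, ← gfold_comm P T h hc m l i v hv]
      simp [Function.iterate_succ_apply]
    · have : i ∈ l := by simpa [hia] using hi
      rw [ih hl.2 this]
      simp [Finsupp.single_apply, hia]

lemma gfold_zero {V : Type*} (T : Fin n → V → V) (l : List (Fin n)) (v : V) :
    gfold T 0 l v = v := by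
  induction l with
  | nil => rfl
  | cons a l ih => exact ih

/-! functions -/

abbrev Sm (f : (Fin n → ℝ) → ℝ) : Prop := ContDiff ℝ (⊤ : ℕ∞) f

lemma sm_pderiv (i : Fin n) (f : (Fin n → ℝ) → ℝ) (hf : Sm f) : Sm (pderivFun i f) := by
  have h : ContDiff ℝ (⊤ : ℕ∞) (fderiv ℝ f) := hf.fderiv_right (by simp)
  exact h.clm_apply contDiff_const

lemma sm_diff {f : (Fin n → ℝ) → ℝ} (hf : Sm f) : Differentiable ℝ f :=
  hf.differentiable (by simp)

lemma pderivFun_comm (i j : Fin n) (f : (Fin n → ℝ) → ℝ) (hf : Sm f) :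
    pderivFun i (pderivFun j f) = pderivFun j (pderivFun i f) := by
  have h : ContDiff ℝ (⊤ : ℕ∞) (fderiv ℝ f) := hf.fderiv_right (by simp)
  have hd : Differentiable ℝ (fderiv ℝ f) := h.differentiable (by simp)
  have key : ∀ (i j : Fin n) x, pderivFun i (pderivFun j f) x
      = fderiv ℝ (fderiv ℝ f) x (Pi.single i 1) (Pi.single j 1) := by
    intro i j x
    unfold pderivFun
    rw [fderiv_clm_apply (hd x) (differentiableAt_const _)]
    simp
  funext x
  rw [key, key]
  have hs : IsSymmSndFDerivAt ℝ f x := by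
    apply (hf.contDiffAt (x := x)).isSymmSndFDerivAt
    simp only [minSmoothness_of_isRCLikeNormedField]
    exact WithTop.coe_le_coe.2 (le_top : (2 : ℕ∞) ≤ ⊤)
  exact hs _ _

lemma multiDerivFun_zero (f : (Fin n → ℝ) → ℝ) : multiDerivFun 0 f = f := gfold_zero _ _ _

lemma multiDerivFun_succ (m : Fin n →₀ ℕ) (i : Fin n) (f : (Fin n → ℝ) → ℝ) (hf : Sm f) :
    multiDerivFun (m + Finsupp.single i 1) f = multiDerivFun m (pderivFun i f) :=
  gfold_succ Sm pderivFun sm_pderiv pderivFun_comm m _ (List.nodup_finRange n) i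
    (List.mem_finRange i) f hf

lemma pderivFun_add (i : Fin n) (f g : (Fin n → ℝ) → ℝ) (hf : Sm f) (hg : Sm g) :
    pderivFun i (fun y => f y + g y) = fun y => pderivFun i f y + pderivFun i g y := by
  funext x
  unfold pderivFun
  rw [fderiv_fun_add (sm_diff hf x) (sm_diff hg x)]
  simp

lemma pderivFun_mul (i : Fin n) (f g : (Fin n → ℝ) → ℝ) (hf : Sm f) (hg : Sm g) :
    pderivFun i (fun y => f y * g y) = fun y => pderivFun i f y * g y + f y * pderivFun i g y := by
  funext x
  unfold pderivFun
  rw [fderiv_fun_mul (sm_diff hf x) (sm_diff hg x)]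
  simp
  ring

lemma multiDerivFun_add (m : Fin n →₀ ℕ) : ∀ (f g : (Fin n → ℝ) → ℝ), Sm f → Sm g →
    multiDerivFun m (fun y => f y + g y) = fun y => multiDerivFun m f y + multiDerivFun m g y := by
  induction m using midx_induction with
  | h0 => intro f g _ _; simp only [multiDerivFun_zero]
  | h1 m i ih =>
    intro f g hf hg
    rw [multiDerivFun_succ m i _ (ContDiff.add hf hg), pderivFun_add i f g hf hg,
      ih _ _ (sm_pderiv i f hf) (sm_pderiv i g hg), multiDerivFun_succ m i f hf,
      multiDerivFun_succ m i g hg]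

lemma multiDerivFun_mul_congr (m : Fin n →₀ ℕ) : ∀ (f g f' g' : (Fin n → ℝ) → ℝ)
    (x x' : Fin n → ℝ), Sm f → Sm g → Sm f' → Sm g' →
    (∀ k ≤ m, multiDerivFun k f x = multiDerivFun k f' x') →
    (∀ k ≤ m, multiDerivFun k g x = multiDerivFun k g' x') →
    multiDerivFun m (fun y => f y * g y) x = multiDerivFun m (fun y => f' y * g' y) x' := by
  induction m using midx_induction with
  | h0 =>
    intro f g f' g' x x' _ _ _ _ h1 h2
    have e1 := h1 0 le_rfl
    have e2 := h2 0 le_rfl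
    simp only [multiDerivFun_zero] at *
    rw [e1, e2]
  | h1 m i ih =>
    intro f g f' g' x x' hf hg hf' hg' h1 h2
    have hf1 := sm_pderiv i f hf
    have hg1 := sm_pderiv i g hg
    have hf1' := sm_pderiv i f' hf'
    have hg1' := sm_pderiv i g' hg'
    rw [multiDerivFun_succ m i _ (ContDiff.mul hf hg), pderivFun_mul i f g hf hg,
      multiDerivFun_succ m i _ (ContDiff.mul hf' hg'), pderivFun_mul i f' g' hf' hg',
      multiDerivFun_add m _ _ (ContDiff.mul hf1 hg) (ContDiff.mul hf hg1),
      multiDerivFun_add m _ _ (ContDiff.mul hf1' hg') (ContDiff.mul hf' hg1')]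
    have hle : m ≤ m + Finsupp.single i 1 := le_self_add
    have a1 : ∀ k ≤ m, multiDerivFun k (pderivFun i f) x = multiDerivFun k (pderivFun i f') x' := by
      intro k hk
      rw [← multiDerivFun_succ k i f hf, ← multiDerivFun_succ k i f' hf']
      exact h1 _ (add_le_add_left hk _)
    have a2 : ∀ k ≤ m, multiDerivFun k (pderivFun i g) x = multiDerivFun k (pderivFun i g') x' := by
      intro k hk
      rw [← multiDerivFun_succ k i g hg, ← multiDerivFun_succ k i g' hg']
      exact h2 _ (add_le_add_left hk _)
    have b1 := ih _ g _ g' x x' hf1 hg hf1' hg' a1 (fun k hk => h2 k (hk.trans hle))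
    have b2 := ih f _ f' _ x x' hf hg1 hf' hg1' (fun k hk => h1 k (hk.trans hle)) a2
    simp only [b1, b2]

/-! polynomials -/

lemma sm_eval (q : MvPolynomial (Fin n) ℝ) : Sm (fun x => MvPolynomial.eval x q) := by
  induction q using MvPolynomial.induction_on with
  | C a => simpa using contDiff_const
  | add p q hp hq => simpa using ContDiff.add hp hq
  | mul_X p i hp => simpa using ContDiff.mul hp (contDiff_apply ℝ ℝ i)

lemma pderivFun_eval (i : Fin n) (q : MvPolynomial (Fin n) ℝ) :
    pderivFun i (fun x => MvPolynomial.eval x q) = fun x => MvPolynomial.eval x (pderiv i q) := by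
  induction q using MvPolynomial.induction_on with
  | C a => funext x; simp [pderivFun]
  | add p q hp hq =>
    have := pderivFun_add i _ _ (sm_eval p) (sm_eval q)
    simp only [map_add]
    rw [this, hp, hq]
  | mul_X p j hp =>
    have := pderivFun_mul i _ _ (sm_eval p) (sm_eval (X j))
    simp only [map_mul]
    rw [this, hp]
    have hX : pderivFun i (fun x : Fin n → ℝ => MvPolynomial.eval x (X j : MvPolynomial (Fin n) ℝ))
        = fun x => MvPolynomial.eval x (pderiv i (X j : MvPolynomial (Fin n) ℝ)) := by
      funext x
      simp only [eval_X, pderivFun]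
      have : fderiv ℝ (fun x : Fin n → ℝ => x j) x = ContinuousLinearMap.proj j :=
        (ContinuousLinearMap.proj (R := ℝ) (φ := fun _ : Fin n => ℝ) j).fderiv
      rw [this, pderiv_X]
      by_cases h : j = i
      · subst h; simp
      · simp [Pi.single_apply, h, Ne.symm h]
    rw [hX]
    funext x
    simp only [pderiv_mul, map_add, map_mul]

/-- multi-factorial -/
def wt (m : Fin n →₀ ℕ) : ℝ := ∏ i, ((m i).factorial : ℝ)

lemma wt_ne (m : Fin n →₀ ℕ) : wt m ≠ 0 :=
  Finset.prod_ne_zero_iff.2 fun i _ => by exact_mod_cast Nat.factorial_ne_zero _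

lemma wt_succ (m : Fin n →₀ ℕ) (i : Fin n) :
    wt (m + Finsupp.single i 1) = (m i + 1) * wt m := by
  unfold wt
  rw [← Finset.mul_prod_erase _ _ (Finset.mem_univ i),
    ← Finset.mul_prod_erase Finset.univ (fun j => ((m j).factorial : ℝ)) (Finset.mem_univ i)]
  have : ∏ x ∈ Finset.univ.erase i, (((m + Finsupp.single i 1 : Fin n →₀ ℕ) x).factorial : ℝ)
      = ∏ x ∈ Finset.univ.erase i, ((m x).factorial : ℝ) := by
    apply Finset.prod_congr rfl
    intro j hj
    have : i ≠ j := (Finset.ne_of_mem_erase hj).symm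
    simp [Finsupp.single_apply, this]
  rw [this]
  simp [Nat.factorial_succ]
  ring

lemma multiDerivFun_eval_zero (m : Fin n →₀ ℕ) : ∀ (q : MvPolynomial (Fin n) ℝ),
    multiDerivFun m (fun x => MvPolynomial.eval x q) 0 = wt m * q.coeff m := by
  induction m using midx_induction with
  | h0 => 
    intro q
    simp [multiDerivFun_zero, wt, constantCoeff_eq]
  | h1 m i ih =>
    intro q
    rw [multiDerivFun_succ m i _ (sm_eval q), pderivFun_eval, ih, coeff_pderiv, wt_succ]
    ring

/-- linear functional with given values on monomials -/
def ev (c : (Fin n →₀ ℕ) → ℝ) : MvPolynomial (Fin n) ℝ →ₗ[ℝ] ℝ :=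
  (basisMonomials (Fin n) ℝ).constr ℝ c

lemma ev_monomial (c : (Fin n →₀ ℕ) → ℝ) (m : Fin n →₀ ℕ) (a : ℝ) :
    ev c (monomial m a) = a * c m := by
  have h : monomial m a = a • (basisMonomials (Fin n) ℝ m) := by
    simp [smul_monomial]
  rw [h, map_smul, ev, Module.Basis.constr_basis, smul_eq_mul]

lemma ev_eq (c : (Fin n →₀ ℕ) → ℝ) (p : MvPolynomial (Fin n) ℝ) :
    ev c p = ∑ m ∈ p.support, p.coeff m * c m := by
  conv_lhs => rw [p.as_sum]
  rw [map_sum]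
  simp only [ev_monomial]

lemma polDeriv_eq (p : MvPolynomial (Fin n) ℝ) (f : (Fin n → ℝ) → ℝ) (x : Fin n → ℝ) :
    polDeriv p f x = ev (fun m => multiDerivFun m f x) p := (ev_eq _ _).symm

lemma fischer_eq (p q : MvPolynomial (Fin n) ℝ) :
    fischer p q = ev (fun m => wt m * q.coeff m) p := by
  unfold fischer
  rw [polDeriv_eq]
  simp only [multiDerivFun_eval_zero]

lemma fischer_add_left (p q r : MvPolynomial (Fin n) ℝ) :
    fischer (p + q) r = fischer p r + fischer q r := by
  simp only [fischer_eq, map_add]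

lemma fischer_smul_left (a : ℝ) (p r : MvPolynomial (Fin n) ℝ) :
    fischer (a • p) r = a * fischer p r := by
  simp only [fischer_eq, map_smul, smul_eq_mul]

lemma fischer_sum_left {ι : Type*} (s : Finset ι) (p : ι → MvPolynomial (Fin n) ℝ)
    (r : MvPolynomial (Fin n) ℝ) :
    fischer (∑ i ∈ s, p i) r = ∑ i ∈ s, fischer (p i) r := by
  simp only [fischer_eq, map_sum]

lemma fischer_symm (p q : MvPolynomial (Fin n) ℝ) : fischer p q = fischer q p := by
  have key : ∀ p q : MvPolynomial (Fin n) ℝ,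
      fischer p q = ∑ m ∈ p.support ∪ q.support, p.coeff m * (wt m * q.coeff m) := by
    intro p q
    rw [fischer_eq, ev_eq]
    apply Finset.sum_subset Finset.subset_union_left
    intro m _ hm
    simp [notMem_support_iff.1 hm]
  rw [key, key, Finset.union_comm]
  exact Finset.sum_congr rfl fun m _ => by ring

lemma fischer_X_mul (p g : MvPolynomial (Fin n) ℝ) (i : Fin n) :
    fischer p (X i * g) = fischer (pderiv i p) g := by
  induction p using MvPolynomial.induction_on' with
  | add p q hp hq => rw [fischer_add_left, hp, hq, map_add, fischer_add_left]
  | monomial m a =>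
    rw [fischer_eq, fischer_eq, pderiv_monomial, ev_monomial, ev_monomial, coeff_X_mul']
    by_cases h : m i = 0
    · simp [h]
    · have hle : Finsupp.single i 1 ≤ m := by
        rw [Finsupp.single_le_iff]; omega
      have he : m - Finsupp.single i 1 + Finsupp.single i 1 = m := tsub_add_cancel_of_le hle
      rw [if_pos (by simpa using h)]
      have hw := wt_succ (m - Finsupp.single i 1 : Fin n →₀ ℕ) i
      rw [he] at hw
      have hc : (((m - Finsupp.single i 1 : Fin n →₀ ℕ) i : ℕ) : ℝ) + 1 = m i := by
        have h2 := DFunLike.congr_fun he i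
        simp only [Finsupp.add_apply, Finsupp.single_eq_same] at h2
        exact_mod_cast h2
      rw [hw, hc]
      ring

lemma pderiv_comm' (i j : Fin n) (q : MvPolynomial (Fin n) ℝ) :
    pderiv i (pderiv j q) = pderiv j (pderiv i q) := by
  ext m
  simp only [coeff_pderiv]
  rw [add_right_comm]
  by_cases h : i = j
  · subst h; rfl
  · simp [Finsupp.single_apply, h, Ne.symm h]
    ring

lemma polyMultiDeriv_zero (p : MvPolynomial (Fin n) ℝ) : polyMultiDeriv 0 p = p :=
  gfold_zero _ _ _

lemma polyMultiDeriv_succ (m : Fin n →₀ ℕ) (i : Fin n) (p : MvPolynomial (Fin n) ℝ) :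
    polyMultiDeriv (m + Finsupp.single i 1) p = polyMultiDeriv m (pderiv i p) :=
  gfold_succ (fun _ => True) (fun i r => pderiv i r) (fun _ _ _ => trivial)
    (fun i j v _ => pderiv_comm' i j v) m _ (List.nodup_finRange n) i
    (List.mem_finRange i) p trivial

lemma fischer_monomial_mul (m : Fin n →₀ ℕ) (a : ℝ) : ∀ (p g : MvPolynomial (Fin n) ℝ),
    fischer p (monomial m a * g) = a * fischer (polyMultiDeriv m p) g := by
  induction m using midx_induction with
  | h0 =>
    intro p g
    rw [polyMultiDeriv_zero, fischer_symm, fischer_symm p g, ← fischer_smul_left, monomial_zero',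
      C_mul']
  | h1 m i ih =>
    intro p g
    rw [polyMultiDeriv_succ, ← ih, ← fischer_X_mul]
    congr 1
    rw [← mul_one a, ← monomial_mul, mul_one]
    change monomial m a * X i * g = _
    ring

lemma fischer_adj (q p g : MvPolynomial (Fin n) ℝ) :
    fischer p (q * g) = fischer (polyApply q p) g := by
  unfold polyApply
  rw [fischer_sum_left]
  conv_lhs => rw [q.as_sum]
  rw [Finset.sum_mul, fischer_symm, fischer_sum_left]
  apply Finset.sum_congr rfl
  intro m _
  rw [fischer_symm, fischer_monomial_mul, fischer_smul_left]

lemma polyApply_mem (q p : MvPolynomial (Fin n) ℝ) : polyApply q p ∈ Wspace p :=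
  Submodule.sum_mem _ fun m _ => Submodule.smul_mem _ _ (Submodule.subset_span ⟨m, rfl⟩)

lemma exists_jet (c : (Fin n →₀ ℕ) → ℝ) (s : Finset (Fin n →₀ ℕ)) :
    ∃ F : MvPolynomial (Fin n) ℝ, ∀ m ∈ s, wt m * F.coeff m = c m := by
  refine ⟨∑ m ∈ s, monomial m (c m / wt m), fun m hm => ?_⟩
  rw [coeff_sum]
  simp only [coeff_monomial]
  rw [Finset.sum_ite_eq' s m, if_pos hm]
  field_simp [wt_ne m]

lemma ev_congr (c c' : (Fin n →₀ ℕ) → ℝ) (p : MvPolynomial (Fin n) ℝ)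
    (h : ∀ m ∈ p.support, c m = c' m) : ev c p = ev c' p := by
  rw [ev_eq, ev_eq]
  exact Finset.sum_congr rfl fun m hm => by rw [h m hm]

end Aux

/-- Generalized Leibniz formula, first form. -/
theorem generalized_leibniz_first_form
    (n : ℕ) (hn : 1 ≤ n) (p : MvPolynomial (Fin n) ℝ)
    (ρ : ℕ) (hρ : ρ = Module.finrank ℝ (Wspace p))
    (b : Fin ρ → MvPolynomial (Fin n) ℝ)
    (hbmem : ∀ j, b j ∈ Wspace p)
    (hbspan : Wspace p ≤ Submodule.span ℝ (Set.range b))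
    (hborth : ∀ i j, fischer (b i) (b j) = if i = j then 1 else 0)
    (f g : (Fin n → ℝ) → ℝ) (hf : ContDiff ℝ (⊤ : ℕ∞) f) (hg : ContDiff ℝ (⊤ : ℕ∞) g)
    (x : Fin n → ℝ) :
    polDeriv p (fun y => f y * g y) x
      = ∑ j : Fin ρ, polDeriv (polyApply (b j) p) f x * polDeriv (b j) g x := by
  classical
  let s : Finset (Fin n →₀ ℕ) := p.support.biUnion Finset.Iic ∪
    (Finset.univ.biUnion fun j => (b j).support ∪ (polyApply (b j) p).support)
  obtain ⟨F, hF⟩ := exists_jet (fun m => multiDerivFun m f x) s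
  obtain ⟨G, hG⟩ := exists_jet (fun m => multiDerivFun m g x) s
  have hL : polDeriv p (fun y => f y * g y) x = fischer p (F * G) := by
    unfold fischer
    rw [polDeriv_eq, polDeriv_eq]
    apply ev_congr
    intro m hm
    simp only [map_mul]
    have hs : ∀ k ≤ m, k ∈ s := fun k hk => Finset.mem_union_left _
      (Finset.mem_biUnion.2 ⟨m, hm, Finset.mem_Iic.2 hk⟩)
    apply multiDerivFun_mul_congr m _ _ _ _ _ _ hf hg (sm_eval F) (sm_eval G)
    · intro k hk
      rw [multiDerivFun_eval_zero, hF k (hs k hk)]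
    · intro k hk
      rw [multiDerivFun_eval_zero, hG k (hs k hk)]
  have hA : ∀ j, polDeriv (polyApply (b j) p) f x = fischer (polyApply (b j) p) F := by
    intro j
    rw [polDeriv_eq, fischer_eq]
    apply ev_congr
    intro m hm
    refine (hF m (Finset.mem_union_right _ (Finset.mem_biUnion.2 ⟨j, Finset.mem_univ j, ?_⟩))).symm
    exact Finset.mem_union_right _ hm
  have hB : ∀ j, polDeriv (b j) g x = fischer (b j) G := by
    intro j
    rw [polDeriv_eq, fischer_eq]
    apply ev_congr
    intro m hm
    refine (hG m (Finset.mem_union_right _ (Finset.mem_biUnion.2 ⟨j, Finset.mem_univ j, ?_⟩))).symm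
    exact Finset.mem_union_left _ hm
  have hexp : ∀ w ∈ Wspace p, w = ∑ j, fischer w (b j) • b j := by
    intro w hw
    obtain ⟨c, hc⟩ := (Submodule.mem_span_range_iff_exists_fun ℝ).1 (hbspan hw)
    have : ∀ k, fischer w (b k) = c k := by
      intro k
      rw [← hc, fischer_sum_left]
      simp [fischer_smul_left, hborth]
    simp only [this, hc]
  rw [hL, fischer_adj, hexp _ (polyApply_mem F p), fischer_sum_left]
  apply Finset.sum_congr rfl
  intro j _
  rw [fischer_smul_left, hA, hB, ← fischer_adj, ← fischer_adj, mul_comm F]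
end
end

section
/- Bernstein identity for the split Jordan algebra V = Mat(m,ℝ) (the case V = Mat(m,ℝ) of Proposition 2.5, a signed Cayley identity): Let m ≥ 1, s ∈ ℂ, and let ε ∈ {+,−}. On the open set of m×m real matrices X with det X ≠ 0, one has det(∂)[ (det X)^{s,ε} ] = s(s+1)⋯(s+m−1) · (det X)^{s−1,−ε}, where (det X)^{s,ε} denotes the signed power of det X. -/
noncomputable section

/-- Signed power `t^{s,ε}`: `t^{s,+} = |t|^s = exp(s·log|t|)` and `t^{s,−} = sign(t)·|t|^s`. -/
def sPow (ε : Bool) (s : ℂ) (t : ℝ) : ℂ :=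
  (if ε then 1 else (Real.sign t : ℂ)) * Complex.exp (s * (Real.log |t| : ℂ))

/-- Partial derivative of a function of an `m×m` real matrix variable in the entry `(i,j)`. -/
def matPd {m : ℕ} (i j : Fin m) (f : (Fin m → Fin m → ℝ) → ℂ) : (Fin m → Fin m → ℝ) → ℂ :=
  fun X => fderiv ℝ f X (Pi.single i (Pi.single j 1))

/-- The operator `det(∂) = Σ_{σ∈S_m} sgn(σ) ∂^m/(∂X_{1σ(1)}⋯∂X_{mσ(m)})`. -/
def detDeriv {m : ℕ} (f : (Fin m → Fin m → ℝ) → ℂ) : (Fin m → Fin m → ℝ) → ℂ :=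
  fun X => ∑ σ : Equiv.Perm (Fin m),
    ((Equiv.Perm.sign σ : ℤ) : ℂ) *
      (List.foldr (fun i g => matPd i (σ i) g) f (List.finRange m)) X


open scoped ContDiff

lemma aux_matPd_sum {m : ℕ} {ι : Type} [Fintype ι] (i j : Fin m) (c : ι → ℂ)
    (g : ι → (Fin m → Fin m → ℝ) → ℂ) (X : Fin m → Fin m → ℝ)
    (hg : ∀ a, DifferentiableAt ℝ (g a) X) :
    matPd i j (fun Y => ∑ a, c a * g a Y) X = ∑ a, c a * matPd i j (g a) X := by
  unfold matPd
  rw [fderiv_fun_sum (fun a _ => (hg a).const_mul (c a))]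
  rw [sum_apply]
  refine Finset.sum_congr rfl fun a _ => ?_
  rw [fderiv_const_mul (hg a)]
  simp

lemma aux_matPd_congr {m : ℕ} (i j : Fin m) {f g : (Fin m → Fin m → ℝ) → ℂ}
    {U : Set (Fin m → Fin m → ℝ)} (hU : IsOpen U) (h : ∀ Y ∈ U, f Y = g Y)
    {X : Fin m → Fin m → ℝ} (hX : X ∈ U) : matPd i j f X = matPd i j g X := by
  unfold matPd
  rw [Filter.EventuallyEq.fderiv_eq]
  filter_upwards [hU.mem_nhds hX] with Y hY using h Y hY

lemma aux_matPd_smooth {m : ℕ} (i j : Fin m) {f : (Fin m → Fin m → ℝ) → ℂ}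
    {U : Set (Fin m → Fin m → ℝ)} (hU : IsOpen U) (h : ContDiffOn ℝ ∞ f U) :
    ContDiffOn ℝ ∞ (matPd i j f) U := by
  unfold matPd
  exact (h.fderiv_of_isOpen hU (by simp)).clm_apply contDiffOn_const

lemma aux_foldr_smooth {m : ℕ} {ι : Type} (I J : ι → Fin m) {f : (Fin m → Fin m → ℝ) → ℂ}
    {U : Set (Fin m → Fin m → ℝ)} (hU : IsOpen U) (h : ContDiffOn ℝ ∞ f U) (l : List ι) :
    ContDiffOn ℝ ∞ (List.foldr (fun b g => matPd (I b) (J b) g) f l) U := by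
  induction l with
  | nil => exact h
  | cons a l ih => exact aux_matPd_smooth _ _ hU ih

lemma aux_diffAt {m : ℕ} {f : (Fin m → Fin m → ℝ) → ℂ}
    {U : Set (Fin m → Fin m → ℝ)} (hU : IsOpen U) (h : ContDiffOn ℝ ∞ f U)
    {X : Fin m → Fin m → ℝ} (hX : X ∈ U) : DifferentiableAt ℝ f X :=
  (h.contDiffAt (hU.mem_nhds hX)).differentiableAt (by simp)

lemma aux_step {m k : ℕ} (s : ℂ) (f : (Fin m → Fin m → ℝ) → ℂ)
    (B : (Fin m → Fin m → ℝ) → Fin m → Fin m → ℂ)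
    (X : Fin m → Fin m → ℝ)
    (hf : DifferentiableAt ℝ f X) (hB : ∀ i j, DifferentiableAt ℝ (fun Y => B Y i j) X)
    (hf' : ∀ i j, matPd i j f X = s * f X * B X j i)
    (hB' : ∀ i j a b, matPd i j (fun Y => B Y a b) X = - (B X a i * B X j b))
    (I J : Fin (k + 1) → Fin m) :
    matPd (I 0) (J 0) (fun Y => f Y * ∏ b : Fin k, B Y (J b.succ) (I b.succ)) X
      = f X * (s * ∏ b, B X (J b) (I b)
        - ∑ b : Fin k, ∏ c, B X (J (Equiv.swap 0 b.succ c)) (I c)) := by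
  have h1 : matPd (I 0) (J 0) (fun Y => f Y * ∏ b : Fin k, B Y (J b.succ) (I b.succ)) X
      = f X * (∑ b : Fin k, (∏ c ∈ Finset.univ.erase b, B X (J c.succ) (I c.succ)) *
          matPd (I 0) (J 0) (fun Y => B Y (J b.succ) (I b.succ)) X)
        + (∏ b : Fin k, B X (J b.succ) (I b.succ)) * matPd (I 0) (J 0) f X := by
    unfold matPd
    rw [fderiv_fun_mul hf (HasFDerivAt.finsetProd fun b _ => (hB _ _).hasFDerivAt).differentiableAt,
      fderiv_finsetProd (fun b _ => hB _ _)]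
    simp
  rw [h1, hf', Fin.prod_univ_succ, mul_sub, Finset.mul_sum, Finset.mul_sum, sub_eq_neg_add,
    ← Finset.sum_neg_distrib]
  congr 1
  · refine Finset.sum_congr rfl fun b _ => ?_
    rw [hB', Fin.prod_univ_succ, ← Finset.mul_prod_erase Finset.univ _ (Finset.mem_univ b)]
    have : ∏ c ∈ Finset.univ.erase b, B X (J (Equiv.swap 0 b.succ c.succ)) (I c.succ)
        = ∏ c ∈ Finset.univ.erase b, B X (J c.succ) (I c.succ) := by
      refine Finset.prod_congr rfl fun c hc => ?_
      rw [Equiv.swap_apply_of_ne_of_ne (Fin.succ_ne_zero c)]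
      exact fun h => (Finset.ne_of_mem_erase hc) (Fin.succ_injective _ h)
    rw [this, Equiv.swap_apply_left, Equiv.swap_apply_right]
    ring
  · ring

lemma aux_main {m : ℕ} (s : ℂ) (f : (Fin m → Fin m → ℝ) → ℂ)
    (B : (Fin m → Fin m → ℝ) → Fin m → Fin m → ℂ)
    (U : Set (Fin m → Fin m → ℝ)) (hU : IsOpen U)
    (hf : ContDiffOn ℝ ∞ f U) (hB : ∀ i j, ContDiffOn ℝ ∞ (fun Y => B Y i j) U)
    (hf' : ∀ X ∈ U, ∀ i j, matPd i j f X = s * f X * B X j i)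
    (hB' : ∀ X ∈ U, ∀ i j a b, matPd i j (fun Y => B Y a b) X = - (B X a i * B X j b))
    (k : ℕ) : ∀ (I J : Fin k → Fin m), ∀ X ∈ U,
    ∑ σ : Equiv.Perm (Fin k), ((Equiv.Perm.sign σ : ℤ) : ℂ) *
      (List.foldr (fun i g => matPd (I i) (J (σ i)) g) f (List.finRange k)) X
    = (∏ l : Fin k, (s + (l : ℕ))) * (f X * ∑ σ : Equiv.Perm (Fin k),
        ((Equiv.Perm.sign σ : ℤ) : ℂ) * ∏ b, B X (J (σ b)) (I b)) := by
  induction k with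
  | zero => intro I J X hX; simp
  | succ k ih =>
    intro I J X hX
    set C : ℂ := ∏ l : Fin k, (s + (l : ℕ)) with hC
    have hfold : ∀ σ : Equiv.Perm (Fin (k+1)),
        List.foldr (fun i g => matPd (I i) (J (σ i)) g) f (List.finRange (k+1))
        = matPd (I 0) (J (σ 0)) (List.foldr (fun i g => matPd (I i.succ) (J (σ i.succ)) g) f
            (List.finRange k)) := by
      intro σ
      rw [List.finRange_succ, List.foldr_cons, List.foldr_map]
    have key : ∀ p : Fin (k+1),
        ∑ e : Equiv.Perm (Fin k), ((Equiv.Perm.sign e : ℤ) : ℂ) *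
          matPd (I 0) (J p) (List.foldr (fun i g => matPd (I i.succ)
            (J (Equiv.swap 0 p (e i).succ)) g) f (List.finRange k)) X
        = ∑ e : Equiv.Perm (Fin k), (C * ((Equiv.Perm.sign e : ℤ) : ℂ)) *
          matPd (I 0) (J p) (fun Y => f Y * ∏ b : Fin k,
            B Y (J (Equiv.swap 0 p (e b).succ)) (I b.succ)) X := by
      intro p
      rw [← aux_matPd_sum, ← aux_matPd_sum]
      · refine aux_matPd_congr _ _ hU (fun Y hY => ?_) hX
        rw [ih (fun i => I i.succ) (fun i => J (Equiv.swap 0 p i.succ)) Y hY, Finset.mul_sum,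
          Finset.mul_sum]
        refine Finset.sum_congr rfl fun e _ => ?_
        ring
      · intro e
        exact aux_diffAt hU (hf.mul (contDiffOn_prod fun b _ => hB _ _)) hX
      · intro e
        exact aux_diffAt hU (aux_foldr_smooth _ (fun i => J (Equiv.swap 0 p (e i).succ)) hU hf _) hX
    have key2 : ∑ σ : Equiv.Perm (Fin (k+1)), ((Equiv.Perm.sign σ : ℤ) : ℂ) *
          matPd (I 0) (J (σ 0)) (List.foldr (fun i g => matPd (I i.succ) (J (σ i.succ)) g) f
            (List.finRange k)) X
        = ∑ σ : Equiv.Perm (Fin (k+1)), C * ((Equiv.Perm.sign σ : ℤ) : ℂ) *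
          matPd (I 0) (J (σ 0)) (fun Y => f Y * ∏ b : Fin k,
            B Y (J (σ b.succ)) (I b.succ)) X := by
      rw [← Equiv.sum_comp Equiv.Perm.decomposeFin.symm, Fintype.sum_prod_type]
      rw [← Equiv.sum_comp Equiv.Perm.decomposeFin.symm, Fintype.sum_prod_type]
      refine Finset.sum_congr rfl fun p _ => ?_
      simp only [Equiv.Perm.decomposeFin.symm_sign, Equiv.Perm.decomposeFin_symm_apply_zero,
        Equiv.Perm.decomposeFin_symm_apply_succ]
      have := congrArg (fun z => (((if p = 0 then 1 else -1 : ℤˣ) : ℤ) : ℂ) * z) (key p)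
      simp only [Finset.mul_sum] at this
      convert this using 2 with e _ e _
      · push_cast; ring
      · push_cast; ring
    simp only [hfold]
    rw [key2]
    have key3 : ∀ σ : Equiv.Perm (Fin (k+1)),
        matPd (I 0) (J (σ 0)) (fun Y => f Y * ∏ b : Fin k, B Y (J (σ b.succ)) (I b.succ)) X
        = f X * (s * ∏ b, B X (J (σ b)) (I b)
        - ∑ b : Fin k, ∏ c, B X (J (σ (Equiv.swap 0 b.succ c))) (I c)) := fun σ =>
      aux_step s f B X (aux_diffAt hU hf hX) (fun i j => aux_diffAt hU (hB i j) hX)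
        (hf' X hX) (hB' X hX) I (fun b => J (σ b))
    simp only [key3]
    set D : ℂ := ∑ σ : Equiv.Perm (Fin (k+1)),
        ((Equiv.Perm.sign σ : ℤ) : ℂ) * ∏ b, B X (J (σ b)) (I b) with hD
    have key4 : ∀ b : Fin k, ∑ σ : Equiv.Perm (Fin (k+1)), ((Equiv.Perm.sign σ : ℤ) : ℂ) *
        ∏ c, B X (J (σ (Equiv.swap 0 b.succ c))) (I c) = - D := by
      intro b
      rw [hD, ← Equiv.sum_comp (Equiv.mulRight (Equiv.swap 0 b.succ)), ← Finset.sum_neg_distrib]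
      refine Finset.sum_congr rfl fun σ _ => ?_
      simp [Equiv.Perm.sign_swap (Fin.succ_ne_zero b).symm]
    have key5 : ∑ σ : Equiv.Perm (Fin (k+1)), ((Equiv.Perm.sign σ : ℤ) : ℂ) *
        ∑ b : Fin k, ∏ c, B X (J (σ (Equiv.swap 0 b.succ c))) (I c) = - (k * D) := by
      simp only [Finset.mul_sum]
      rw [Finset.sum_comm]
      simp only [key4]
      simp
    rw [Fin.prod_univ_castSucc]
    simp only [Fin.val_castSucc, Fin.val_last]
    rw [← hC]
    calc _ = C * f X * (s * D - ∑ σ : Equiv.Perm (Fin (k+1)), ((Equiv.Perm.sign σ : ℤ) : ℂ) *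
        ∑ b : Fin k, ∏ c, B X (J (σ (Equiv.swap 0 b.succ c))) (I c)) := by
          rw [hD, Finset.mul_sum, ← Finset.sum_sub_distrib, Finset.mul_sum]
          refine Finset.sum_congr rfl fun σ _ => ?_
          ring
      _ = _ := by rw [key5]; ring

lemma aux_det_smooth {m : ℕ} : ContDiff ℝ ∞ (fun Y : Fin m → Fin m → ℝ => (Matrix.of Y).det) := by
  simp only [Matrix.det_apply', Matrix.of_apply]
  fun_prop

lemma aux_adj_smooth {m : ℕ} (i j : Fin m) :
    ContDiff ℝ ∞ (fun Y : Fin m → Fin m → ℝ => (Matrix.of Y).adjugate i j) := by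
  simp only [Matrix.adjugate_apply]
  refine aux_det_smooth.comp (g := fun Y : Fin m → Fin m → ℝ => (Matrix.of Y).det)
    (f := fun Y : Fin m → Fin m → ℝ => fun a b => (Matrix.of Y).updateRow j (Pi.single i 1) a b) ?_
  rw [contDiff_pi]
  intro a
  rw [contDiff_pi]
  intro b
  by_cases h : a = j
  · subst h
    simp only [Matrix.updateRow_self]
    exact contDiff_const
  · simp only [Matrix.updateRow_ne h, Matrix.of_apply]
    fun_prop

lemma aux_inv_smooth {m : ℕ} (i j : Fin m) :
    ContDiffOn ℝ ∞ (fun Y : Fin m → Fin m → ℝ => (Matrix.of Y)⁻¹ i j)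
      {Y | (Matrix.of Y).det ≠ 0} := by
  simp only [Matrix.inv_def, Matrix.smul_apply, Ring.inverse_eq_inv', smul_eq_mul]
  exact (aux_det_smooth.contDiffOn.inv (fun x hx => hx)).mul (aux_adj_smooth i j).contDiffOn

lemma aux_det_deriv {m : ℕ} (i j : Fin m) (X : Fin m → Fin m → ℝ) :
    fderiv ℝ (fun Y : Fin m → Fin m → ℝ => (Matrix.of Y).det) X (Pi.single i (Pi.single j 1))
      = (Matrix.of X).adjugate j i := by
  have hd : DifferentiableAt ℝ (fun Y : Fin m → Fin m → ℝ => (Matrix.of Y).det) X :=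
    aux_det_smooth.differentiable (by simp) X
  rw [← hd.lineDeriv_eq_fderiv]
  unfold lineDeriv
  have : ∀ t : ℝ, (Matrix.of (X + t • (Pi.single i (Pi.single j 1) : Fin m → Fin m → ℝ))).det
      = (Matrix.of X).det + t * (Matrix.of X).adjugate j i := by
    intro t
    have h : Matrix.of (X + t • (Pi.single i (Pi.single j 1) : Fin m → Fin m → ℝ))
      = (Matrix.of X).updateRow i ((Matrix.of X) i + t • Pi.single j 1) := by
      ext a b
      by_cases h : a = i
      · subst h; simp
      · simp [Matrix.updateRow_ne h, h]
    rw [h, Matrix.det_updateRow_add, Matrix.det_updateRow_smul, Matrix.adjugate_apply]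
    simp
  simp only [this]
  simp

lemma aux_inv_deriv {m : ℕ} (i j a b : Fin m) (X : Fin m → Fin m → ℝ)
    (hX : (Matrix.of X).det ≠ 0) :
    fderiv ℝ (fun Y : Fin m → Fin m → ℝ => (Matrix.of Y)⁻¹ a b) X (Pi.single i (Pi.single j 1))
      = - ((Matrix.of X)⁻¹ a i * (Matrix.of X)⁻¹ j b) := by
  have hU : IsOpen {Y : Fin m → Fin m → ℝ | (Matrix.of Y).det ≠ 0} :=
    isOpen_ne_fun aux_det_smooth.continuous continuous_const
  have hd : ∀ a b, DifferentiableAt ℝ (fun Y : Fin m → Fin m → ℝ => (Matrix.of Y)⁻¹ a b) X :=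
    fun a b => ((aux_inv_smooth a b).contDiffAt (hU.mem_nhds hX)).differentiableAt (by simp)
  set D : Matrix (Fin m) (Fin m) ℝ := Matrix.of fun a b =>
    fderiv ℝ (fun Y : Fin m → Fin m → ℝ => (Matrix.of Y)⁻¹ a b) X (Pi.single i (Pi.single j 1))
    with hD
  have h1 : D * Matrix.of X = - Matrix.of fun a n => (Matrix.of X)⁻¹ a i * (if n = j then 1 else 0) := by
    ext a n
    have hp : ∀ l n : Fin m, HasFDerivAt (fun Y : Fin m → Fin m → ℝ => Y l n)
        ((ContinuousLinearMap.proj n : (Fin m → ℝ) →L[ℝ] ℝ).comp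
          (ContinuousLinearMap.proj l : (Fin m → Fin m → ℝ) →L[ℝ] (Fin m → ℝ))) X := fun l n =>
      ContinuousLinearMap.hasFDerivAt ((ContinuousLinearMap.proj n : (Fin m → ℝ) →L[ℝ] ℝ).comp
          (ContinuousLinearMap.proj l : (Fin m → Fin m → ℝ) →L[ℝ] (Fin m → ℝ)))
    have h2 := HasFDerivAt.fun_sum (u := Finset.univ) (fun l _ => ((hd a l).hasFDerivAt.mul (hp l n)))
    have h3 : HasFDerivAt (fun Y : Fin m → Fin m → ℝ => ∑ l, (Matrix.of Y)⁻¹ a l * Y l n)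
        (0 : (Fin m → Fin m → ℝ) →L[ℝ] ℝ) X := by
      refine (hasFDerivAt_const ((1 : Matrix (Fin m) (Fin m) ℝ) a n) X).congr_of_eventuallyEq ?_
      filter_upwards [hU.mem_nhds hX] with Y hY
      rw [← Matrix.nonsing_inv_mul (Matrix.of Y) (isUnit_iff_ne_zero.mpr hY), Matrix.mul_apply]
      rfl
    have h4 := congrArg (fun L : (Fin m → Fin m → ℝ) →L[ℝ] ℝ => L (Pi.single i (Pi.single j 1)))
      (h2.unique h3)
    simp only [sum_apply, add_apply,
      smul_apply, ContinuousLinearMap.comp_apply,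
      ContinuousLinearMap.proj_apply, smul_eq_mul, zero_apply,
      Finset.sum_add_distrib] at h4
    have h5 : ∑ l, (Matrix.of X)⁻¹ a l * (Pi.single i (Pi.single j 1) : Fin m → Fin m → ℝ) l n
        = (Matrix.of X)⁻¹ a i * (if n = j then 1 else 0) := by
      rw [Finset.sum_eq_single i]
      · simp [Pi.single_apply]
      · intro l _ hl; simp [hl]
      · simp
    rw [h5] at h4
    rw [Matrix.mul_apply]
    simp only [hD, Matrix.neg_apply, Matrix.of_apply]
    rw [eq_neg_iff_add_eq_zero, add_comm]
    refine Eq.trans ?_ h4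
    congr 1
    exact Finset.sum_congr rfl fun l _ => mul_comm _ _
  have h6 : D = (- Matrix.of fun a n => (Matrix.of X)⁻¹ a i * (if n = j then 1 else 0)) *
      (Matrix.of X)⁻¹ := by
    rw [← h1, Matrix.mul_assoc, Matrix.mul_nonsing_inv _ (isUnit_iff_ne_zero.mpr hX), mul_one]
  have h7 := congrFun (congrFun h6 a) b
  rw [Matrix.mul_apply] at h7
  simp only [hD, Matrix.of_apply, Matrix.neg_apply] at h7
  rw [h7]
  simp

lemma aux_sPow_eventually (ε : Bool) (s : ℂ) (t : ℝ) (ht : t ≠ 0) :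
    sPow ε s =ᶠ[nhds t] fun u => (if ε then 1 else (Real.sign t : ℂ)) *
      Complex.exp (s * (Real.log u : ℂ)) := by
  have : ∀ᶠ u in nhds t, Real.sign u = Real.sign t := by
    rcases lt_or_gt_of_ne ht with h | h
    · filter_upwards [eventually_lt_nhds h] with u hu
      rw [Real.sign_of_neg hu, Real.sign_of_neg h]
    · filter_upwards [eventually_gt_nhds h] with u hu
      rw [Real.sign_of_pos hu, Real.sign_of_pos h]
  filter_upwards [this] with u hu
  simp [sPow, hu]

lemma aux_sPow_smooth (ε : Bool) (s : ℂ) (t : ℝ) (ht : t ≠ 0) : ContDiffAt ℝ ∞ (sPow ε s) t := by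
  refine ContDiffAt.congr_of_eventuallyEq ?_ (aux_sPow_eventually ε s t ht)
  refine contDiffAt_const.mul (ContDiffAt.cexp (contDiffAt_const.mul ?_))
  exact Complex.ofRealCLM.contDiff.contDiffAt.comp t (Real.contDiffAt_log.mpr ht)

lemma aux_sPow_deriv (ε : Bool) (s : ℂ) (t : ℝ) (ht : t ≠ 0) :
    HasDerivAt (sPow ε s) (s * sPow ε s t * (t⁻¹ : ℝ)) t := by
  refine HasDerivAt.congr_of_eventuallyEq ?_ (aux_sPow_eventually ε s t ht)
  have := ((((Real.hasDerivAt_log ht).ofReal_comp).const_mul s).cexp).const_mul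
    (if ε then 1 else (Real.sign t : ℂ))
  have e : s * sPow ε s t * (t⁻¹ : ℝ) = (if ε then 1 else (Real.sign t : ℂ)) *
      (Complex.exp (s * (Real.log t : ℂ)) * (s * (t⁻¹ : ℝ))) := by
    simp only [sPow, Real.log_abs]
    ring
  rw [e]
  exact this

lemma aux_sPow_shift (ε : Bool) (s : ℂ) (t : ℝ) (ht : t ≠ 0) :
    sPow ε s t * (t⁻¹ : ℝ) = sPow (!ε) (s - 1) t := by
  have h0 : Complex.exp ((Real.log |t| : ℝ) : ℂ) = ((|t| : ℝ) : ℂ) := by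
    rw [← Complex.ofReal_exp, Real.exp_log (abs_pos.mpr ht)]
  have h1 : ((|t| : ℝ) : ℂ) ≠ 0 := by exact_mod_cast (abs_pos.mpr ht).ne'
  have h2 : (t : ℂ) ≠ 0 := by exact_mod_cast ht
  unfold sPow
  rw [sub_mul, one_mul, Complex.exp_sub, h0]
  rcases lt_or_gt_of_ne ht with h | h
  · rw [Real.sign_of_neg h, abs_of_neg h]
    cases ε <;> simp <;> field_simp
  · rw [Real.sign_of_pos h, abs_of_pos h]
    cases ε <;> simp <;> field_simp

/-- Bernstein identity (signed Cayley identity) for `V = Mat(m,ℝ)`: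
`det(∂)[(det X)^{s,ε}] = s(s+1)⋯(s+m−1)·(det X)^{s−1,−ε}` on `{det X ≠ 0}`. -/
theorem bernstein_identity_matrix (m : ℕ) (hm : 1 ≤ m) (s : ℂ) (ε : Bool)
    (X : Fin m → Fin m → ℝ) (hX : (Matrix.of X).det ≠ 0) :
    detDeriv (fun Y => sPow ε s ((Matrix.of Y).det)) X
      = (∏ k : Fin m, (s + (k : ℕ))) * sPow (!ε) (s - 1) ((Matrix.of X).det) := by
  have hU : IsOpen {Y : Fin m → Fin m → ℝ | (Matrix.of Y).det ≠ 0} :=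
    isOpen_ne_fun aux_det_smooth.continuous continuous_const
  have main := aux_main s (fun Y : Fin m → Fin m → ℝ => sPow ε s ((Matrix.of Y).det))
    (fun Y i j => (((Matrix.of Y)⁻¹ i j : ℝ) : ℂ)) {Y | (Matrix.of Y).det ≠ 0} hU
    (fun Y hY => ((aux_sPow_smooth ε s _ hY).comp Y
      aux_det_smooth.contDiffAt).contDiffWithinAt)
    (fun i j => Complex.ofRealCLM.contDiff.comp_contDiffOn (aux_inv_smooth i j))
    (by
      intro Y hY i j
      have hd : DifferentiableAt ℝ (fun Y : Fin m → Fin m → ℝ => (Matrix.of Y).det) Y :=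
        aux_det_smooth.differentiable (by simp) Y
      have h := (aux_sPow_deriv ε s _ hY).hasFDerivAt.comp Y hd.hasFDerivAt
      unfold matPd
      refine (DFunLike.congr_fun h.fderiv _).trans ?_
      simp only [ContinuousLinearMap.comp_apply, aux_det_deriv]
      rw [Matrix.inv_def]
      simp
      ring)
    (by
      intro Y hY i j a b
      have hd : DifferentiableAt ℝ (fun Y : Fin m → Fin m → ℝ => (Matrix.of Y)⁻¹ a b) Y :=
        ((aux_inv_smooth a b).contDiffAt (hU.mem_nhds hY)).differentiableAt (by simp)
      have h := Complex.ofRealCLM.hasFDerivAt.comp Y hd.hasFDerivAt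
      unfold matPd
      refine (DFunLike.congr_fun h.fderiv _).trans ?_
      simp only [ContinuousLinearMap.comp_apply, aux_inv_deriv i j a b Y hY]
      simp)
    m id id X hX
  unfold detDeriv
  simp only [id] at main
  rw [main]
  congr 1
  rw [← aux_sPow_shift ε s _ hX]
  congr 1
  rw [← Ring.inverse_eq_inv', ← Matrix.det_nonsing_inv, Matrix.det_apply']
  push_cast
  rfl
end
end

section
/- Bernstein identity for the quadratic form of signature (p,q) (the case V = ℝ^{p,q} of the Bernstein identities of Section 2, with the standard d'Alembertian normalization): Let s ∈ ℂ and ε ∈ {+,−}. Then at every x ∈ ℝⁿ with P(x) ≠ 0, P(∂/∂x)[ P(x)^{s,ε} ] = 2s(2s + n − 2) · P(x)^{s−1,−ε}. -/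
noncomputable section

/-- `εᵢ`: the sign of the `i`-th coordinate for the quadratic form of signature `(p,q)`. -/
def sgn (p : ℕ) {n : ℕ} (i : Fin n) : ℝ := if (i : ℕ) < p then 1 else -1

/-- The quadratic form `P(x) = x₁²+⋯+x_p² − x_{p+1}²−⋯−x_n²` on `ℝⁿ`, `n = p+q`. -/
def Pform (p : ℕ) {n : ℕ} (x : Fin n → ℝ) : ℝ := ∑ i, sgn p i * x i ^ 2

/-- The associated symmetric bilinear form `P(x,y) = Σ_{i≤p} xᵢyᵢ − Σ_{i>p} xᵢyᵢ`. -/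
def Pbil (p : ℕ) {n : ℕ} (x y : Fin n → ℝ) : ℝ := ∑ i, sgn p i * x i * y i

/-- Partial derivative `∂/∂xᵢ` of a complex-valued function on `ℝⁿ`. -/
def pd {n : ℕ} (i : Fin n) (f : (Fin n → ℝ) → ℂ) : (Fin n → ℝ) → ℂ :=
  fun x => fderiv ℝ f x (Pi.single i 1)

/-- The operator `P(∂/∂x) = Σᵢ εᵢ ∂²/∂xᵢ²`. -/
def Pop (p : ℕ) {n : ℕ} (f : (Fin n → ℝ) → ℂ) : (Fin n → ℝ) → ℂ :=
  fun x => ∑ i, (sgn p i : ℂ) * pd i (pd i f) x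

theorem aux_mul (ε : Bool) (s : ℂ) (t : ℝ) (ht : t ≠ 0) :
    (t : ℂ) * sPow ε (s - 1) t = sPow (!ε) s t := by
  have h1 : Complex.exp (s * (Real.log |t| : ℂ))
      = (|t| : ℝ) * Complex.exp ((s - 1) * (Real.log |t| : ℂ)) := by
    have : ((|t| : ℝ) : ℂ) = Complex.exp (Real.log |t| : ℂ) := by
      rw [← Complex.ofReal_exp, Real.exp_log (abs_pos.mpr ht)]
    rw [this, ← Complex.exp_add]
    congr 1
    ring
  unfold sPow
  rw [h1]
  rcases lt_or_gt_of_ne ht with h | h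
  · cases ε <;> simp [Real.sign_of_neg h, abs_of_neg h]
  · cases ε <;> simp [Real.sign_of_pos h, abs_of_pos h]

theorem aux_deriv (ε : Bool) (s : ℂ) (t : ℝ) (ht : t ≠ 0) :
    HasDerivAt (sPow ε s) (s * sPow (!ε) (s - 1) t) t := by
  have hlog : HasDerivAt (fun u : ℝ => Real.log |u|) t⁻¹ t := by
    simpa [Real.log_abs] using Real.hasDerivAt_log ht
  have h2 : HasDerivAt (fun u : ℝ => Complex.exp (s * (Real.log |u| : ℂ)))
      (Complex.exp (s * (Real.log |t| : ℂ)) * (s * ((t⁻¹ : ℝ) : ℂ))) t :=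
    (hlog.ofReal_comp.const_mul s).cexp
  have h3 := h2.const_mul (if ε then 1 else (Real.sign t : ℂ))
  have h4 : sPow ε s =ᶠ[nhds t] fun u => (if ε then 1 else (Real.sign t : ℂ)) *
      Complex.exp (s * (Real.log |u| : ℂ)) := by
    rcases lt_or_gt_of_ne ht with h | h
    · filter_upwards [eventually_lt_nhds h] with u hu
      simp [sPow, Real.sign_of_neg h, Real.sign_of_neg hu]
    · filter_upwards [eventually_gt_nhds h] with u hu
      simp [sPow, Real.sign_of_pos h, Real.sign_of_pos hu]
  refine (h3.congr_of_eventuallyEq h4).congr_deriv ?_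
  have h5 := aux_mul (!ε) s t ht
  rw [Bool.not_not] at h5
  have ht' : (t : ℂ) ≠ 0 := by exact_mod_cast ht
  have h6 : (if ε then 1 else (Real.sign t : ℂ)) * Complex.exp (s * (Real.log |t| : ℂ))
      = t * sPow (!ε) (s - 1) t := h5.symm
  rw [← mul_assoc, h6]
  push_cast
  field_simp

theorem aux_line (p : ℕ) {n : ℕ} (y : Fin n → ℝ) :
    HasFDerivAt (Pform p : (Fin n → ℝ) → ℝ)
      (∑ i, (2 * sgn p i * y i) • ContinuousLinearMap.proj (R := ℝ) (φ := fun _ : Fin n => ℝ) i) y := by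
  unfold Pform
  refine HasFDerivAt.fun_sum fun i _ => ?_
  have h := ((hasFDerivAt_apply (𝕜 := ℝ) (F' := fun _ : Fin n => ℝ) i y).pow 2).const_mul (sgn p i)
  refine h.congr_fderiv ?_
  ext v
  simp
  ring

theorem aux_fd (p : ℕ) {n : ℕ} (ε : Bool) (s : ℂ) (y : Fin n → ℝ) (hy : Pform p y ≠ 0) :
    HasFDerivAt (fun z => sPow ε s (Pform p z))
      ((∑ i, (2 * sgn p i * y i) • ContinuousLinearMap.proj (R := ℝ) (φ := fun _ : Fin n => ℝ) i).smulRight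
        (s * sPow (!ε) (s - 1) (Pform p y))) y := by
  refine ((aux_deriv ε s _ hy).hasFDerivAt.comp y (aux_line p y)).congr_fderiv ?_
  ext v
  simp [Finset.sum_mul]

theorem aux_pd (p : ℕ) {n : ℕ} (ε : Bool) (s : ℂ) (y : Fin n → ℝ) (hy : Pform p y ≠ 0)
    (i : Fin n) :
    pd i (fun z => sPow ε s (Pform p z)) y
      = (y i : ℂ) * (2 * sgn p i * s * sPow (!ε) (s - 1) (Pform p y)) := by
  unfold pd
  rw [(aux_fd p ε s y hy).fderiv]
  simp [Pi.single_apply]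
  ring

theorem aux_pd2 (p : ℕ) {n : ℕ} (ε : Bool) (s : ℂ) (x : Fin n → ℝ) (hx : Pform p x ≠ 0)
    (i : Fin n) :
    pd i (pd i (fun z => sPow ε s (Pform p z))) x
      = 2 * sgn p i * s * sPow (!ε) (s - 1) (Pform p x)
        + 4 * (sgn p i : ℂ) ^ 2 * (x i : ℂ) ^ 2 * s * (s - 1) * sPow ε (s - 1 - 1) (Pform p x) := by
  have hev : pd i (fun z => sPow ε s (Pform p z)) =ᶠ[nhds x]
      fun y => (y i : ℂ) * (2 * sgn p i * s * sPow (!ε) (s - 1) (Pform p y)) := by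
    filter_upwards [(aux_line p x).continuousAt.eventually_ne hx] with y hy
    exact aux_pd p ε s y hy i
  have hc : HasFDerivAt (fun y : Fin n → ℝ => (y i : ℂ))
      (Complex.ofRealCLM.comp (ContinuousLinearMap.proj (R := ℝ) (φ := fun _ : Fin n => ℝ) i)) x :=
    Complex.ofRealCLM.hasFDerivAt.comp x
      (hasFDerivAt_apply (𝕜 := ℝ) (F' := fun _ : Fin n => ℝ) i x)
  have hm := hc.mul ((aux_fd p (!ε) (s - 1) x hx).const_mul (2 * (sgn p i : ℂ) * s))
  have hm' := hm.congr_of_eventuallyEq hev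
  show fderiv ℝ _ x _ = _
  rw [hm'.fderiv]
  simp [Pi.single_apply]
  ring

/-- Bernstein identity for the quadratic form of signature `(p,q)`:
`P(∂/∂x)[P(x)^{s,ε}] = 2s(2s+n−2)·P(x)^{s−1,−ε}` on `{P(x) ≠ 0}`. -/
theorem bernstein_identity_Rpq (p q : ℕ) (hp : 1 ≤ p) (n : ℕ) (hn : n = p + q)
    (s : ℂ) (ε : Bool) (x : Fin n → ℝ) (hx : Pform p x ≠ 0) :
    Pop p (fun y => sPow ε s (Pform p y)) x
      = 2 * s * (2 * s + (n : ℂ) - 2) * sPow (!ε) (s - 1) (Pform p x) := by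
  have hs : ∀ i : Fin n, (sgn p i : ℂ) ^ 2 = 1 := by
    intro i
    unfold sgn
    split_ifs <;> simp
  have hP : (Pform p x : ℂ) = ∑ i, (sgn p i : ℂ) * (x i : ℂ) ^ 2 := by
    simp [Pform]
  have hA := aux_mul ε (s - 1) _ hx
  unfold Pop
  have : ∀ i ∈ Finset.univ, (sgn p i : ℂ) * pd i (pd i (fun y => sPow ε s (Pform p y))) x
      = 2 * s * sPow (!ε) (s - 1) (Pform p x)
        + ((sgn p i : ℂ) * (x i : ℂ) ^ 2) * (4 * s * (s - 1) * sPow ε (s - 1 - 1) (Pform p x)) := by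
    intro i _
    rw [aux_pd2 p ε s x hx i]
    linear_combination (2 * s * sPow (!ε) (s - 1) (Pform p x)
      + ((sgn p i : ℂ) * (x i : ℂ) ^ 2) * (4 * s * (s - 1) * sPow ε (s - 1 - 1) (Pform p x))) * hs i
  rw [Finset.sum_congr rfl this, Finset.sum_add_distrib, Finset.sum_const, ← Finset.sum_mul, ← hP]
  simp only [Finset.card_univ, Fintype.card_fin, nsmul_eq_mul]
  linear_combination (4 * s * (s - 1)) * hA
end
end

section
/- Main identity for V = ℝ^{p,q} with explicit operator D_{s,t} (Theorem 8.2): Let s, t ∈ ℂ and ε, η ∈ {+,−}, and let f be a smooth complex-valued function on ℝⁿ×ℝⁿ. Define (D_{s,t}f)(ξ,ζ) := P(ξ)P(ζ)·(P(∂/∂ξ − ∂/∂ζ)f)(ξ,ζ) + 4s·P(ζ)·Σ_{j=1}^{n} ξⱼ·(∂f/∂ξⱼ − ∂f/∂ζⱼ)(ξ,ζ) + 4t·P(ξ)·Σ_{j=1}^{n} ζⱼ·(∂f/∂ζⱼ − ∂f/∂ξⱼ)(ξ,ζ) + [ 2t(2t−2+n)·P(ξ) − 8st·P(ξ,ζ)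 + 2s(2s−2+n)·P(ζ) ]·f(ξ,ζ). Then at every point (ξ,ζ) with P(ξ) ≠ 0 and P(ζ) ≠ 0, P(∂/∂ξ − ∂/∂ζ)[ P(ξ)^{s,ε} P(ζ)^{t,η} f(ξ,ζ) ] = P(ξ)^{s−1,−ε} P(ζ)^{t−1,−η} · (D_{s,t}f)(ξ,ζ). -/
noncomputable section

/-- Partial derivative `∂/∂ξᵢ` (first variable) of a function on `ℝⁿ×ℝⁿ`. -/
def pdx {n : ℕ} (i : Fin n) (f : (Fin n → ℝ) × (Fin n → ℝ) → ℂ) :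
    (Fin n → ℝ) × (Fin n → ℝ) → ℂ :=
  fun z => fderiv ℝ f z (Pi.single i 1, 0)

/-- Partial derivative `∂/∂ζᵢ` (second variable) of a function on `ℝⁿ×ℝⁿ`. -/
def pdy {n : ℕ} (i : Fin n) (f : (Fin n → ℝ) × (Fin n → ℝ) → ℂ) :
    (Fin n → ℝ) × (Fin n → ℝ) → ℂ :=
  fun z => fderiv ℝ f z (0, Pi.single i 1)

/-- The operator `∂/∂ξᵢ − ∂/∂ζᵢ`. -/
def pdiff {n : ℕ} (i : Fin n) (f : (Fin n → ℝ) × (Fin n → ℝ) → ℂ) :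
    (Fin n → ℝ) × (Fin n → ℝ) → ℂ :=
  fun z => pdx i f z - pdy i f z

/-- The operator `P(∂/∂ξ − ∂/∂ζ) = Σᵢ εᵢ (∂/∂ξᵢ − ∂/∂ζᵢ)²`. -/
def PopDiff (p : ℕ) {n : ℕ} (f : (Fin n → ℝ) × (Fin n → ℝ) → ℂ) :
    (Fin n → ℝ) × (Fin n → ℝ) → ℂ :=
  fun z => ∑ i, (sgn p i : ℂ) * pdiff i (pdiff i f) z

/-- The differential operator `D_{s,t}` of Theorem 8.2. -/
def Dst (p : ℕ) {n : ℕ} (s t : ℂ) (f : (Fin n → ℝ) × (Fin n → ℝ) → ℂ) :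
    (Fin n → ℝ) × (Fin n → ℝ) → ℂ :=
  fun z =>
    (Pform p z.1 : ℂ) * (Pform p z.2 : ℂ) * PopDiff p f z
    + 4 * s * (Pform p z.2 : ℂ) * ∑ j, (z.1 j : ℂ) * (pdx j f z - pdy j f z)
    + 4 * t * (Pform p z.1 : ℂ) * ∑ j, (z.2 j : ℂ) * (pdy j f z - pdx j f z)
    + (2 * t * (2 * t - 2 + (n : ℂ)) * (Pform p z.1 : ℂ)
        - 8 * s * t * (Pbil p z.1 z.2 : ℂ)
        + 2 * s * (2 * s - 2 + (n : ℂ)) * (Pform p z.2 : ℂ)) * f z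

theorem aux_sPow_mul (ε : Bool) (s : ℂ) (x : ℝ) (hx : x ≠ 0) :
    sPow (!ε) (s - 1) x * (x : ℂ) = sPow ε s x := by
  have hexp : Complex.exp ((s - 1) * (Real.log |x| : ℂ)) * ((|x| : ℝ) : ℂ)
      = Complex.exp (s * (Real.log |x| : ℂ)) := by
    have h1 : ((|x| : ℝ) : ℂ) = Complex.exp (Real.log |x| : ℂ) := by
      rw [← Complex.ofReal_exp, Real.exp_log (abs_pos.mpr hx)]
    rw [h1, ← Complex.exp_add]
    congr 1
    ring
  unfold sPow
  rw [← hexp]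
  rcases lt_or_gt_of_ne hx with h | h
  · cases ε <;> simp [Real.sign_of_neg h, abs_of_neg h]
  · cases ε <;> simp [Real.sign_of_pos h, abs_of_pos h]

theorem aux_sPow_deriv_s9 (ε : Bool) (s : ℂ) (x : ℝ) (hx : x ≠ 0) :
    HasDerivAt (sPow ε s) (s * sPow (!ε) (s - 1) x) x := by
  have hxc : (x : ℂ) ≠ 0 := by exact_mod_cast hx
  have hlog : HasDerivAt (fun y : ℝ => ((Real.log |y| : ℝ) : ℂ)) ((x⁻¹ : ℝ) : ℂ) x := by
    have := (Real.hasDerivAt_log hx).ofReal_comp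
    simpa only [Real.log_abs] using this
  have h2 := (hlog.const_mul s).cexp.const_mul (if ε then (1 : ℂ) else (Real.sign x : ℂ))
  have hev : sPow ε s =ᶠ[nhds x] fun y => (if ε then (1 : ℂ) else (Real.sign x : ℂ)) *
      Complex.exp (s * (Real.log |y| : ℂ)) := by
    rcases lt_or_gt_of_ne hx with h | h
    · filter_upwards [gt_mem_nhds h] with y hy
      simp [sPow, Real.sign_of_neg h, Real.sign_of_neg hy]
    · filter_upwards [lt_mem_nhds h] with y hy
      simp [sPow, Real.sign_of_pos h, Real.sign_of_pos hy]
  refine (h2.congr_of_eventuallyEq hev).congr_deriv ?_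
  have h3 := aux_sPow_mul ε s x hx
  have h4 : sPow (!ε) (s - 1) x = sPow ε s x * (x : ℂ)⁻¹ := by
    rw [← h3]; field_simp
  rw [h4]
  unfold sPow
  push_cast
  ring

theorem aux_pdiff {n : ℕ} (i : Fin n) (f : (Fin n → ℝ) × (Fin n → ℝ) → ℂ) (z) :
    pdiff i f z = fderiv ℝ f z (Pi.single i 1, -Pi.single i 1) := by
  unfold pdiff pdx pdy
  rw [← map_sub]
  simp

theorem aux_of {n : ℕ} {i : Fin n} {f : (Fin n → ℝ) × (Fin n → ℝ) → ℂ} {z}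
    {L : (Fin n → ℝ) × (Fin n → ℝ) →L[ℝ] ℂ} (h : HasFDerivAt f L z) :
    pdiff i f z = L (Pi.single i 1, -Pi.single i 1) := by
  rw [aux_pdiff, h.fderiv]

theorem aux_mul_s9 {n : ℕ} (i : Fin n) {f g : (Fin n → ℝ) × (Fin n → ℝ) → ℂ} {z}
    (hf : DifferentiableAt ℝ f z) (hg : DifferentiableAt ℝ g z) :
    pdiff i (fun w => f w * g w) z = f z * pdiff i g z + pdiff i f z * g z := by
  rw [aux_of (hf.hasFDerivAt.fun_mul hg.hasFDerivAt), aux_pdiff, aux_pdiff]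
  simp [mul_comm]

theorem aux_add {n : ℕ} (i : Fin n) {f g : (Fin n → ℝ) × (Fin n → ℝ) → ℂ} {z}
    (hf : DifferentiableAt ℝ f z) (hg : DifferentiableAt ℝ g z) :
    pdiff i (fun w => f w + g w) z = pdiff i f z + pdiff i g z := by
  rw [aux_of (hf.hasFDerivAt.fun_add hg.hasFDerivAt), aux_pdiff, aux_pdiff]
  simp

theorem aux_const {n : ℕ} (i : Fin n) (c : ℂ) (z) :
    pdiff i (fun _ => c) z = 0 := by
  rw [aux_of (hasFDerivAt_const c z)]
  simp

theorem aux_X1 {n : ℕ} (i : Fin n) (z : (Fin n → ℝ) × (Fin n → ℝ)) :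
    HasFDerivAt (fun w : (Fin n → ℝ) × (Fin n → ℝ) => w.1 i)
      ((ContinuousLinearMap.proj (R := ℝ) (φ := fun _ : Fin n => ℝ) i).comp
        (ContinuousLinearMap.fst ℝ (Fin n → ℝ) (Fin n → ℝ))) z :=
  ContinuousLinearMap.hasFDerivAt (𝕜 := ℝ)
    ((ContinuousLinearMap.proj (R := ℝ) (φ := fun _ : Fin n => ℝ) i).comp
        (ContinuousLinearMap.fst ℝ (Fin n → ℝ) (Fin n → ℝ)))

theorem aux_X2 {n : ℕ} (i : Fin n) (z : (Fin n → ℝ) × (Fin n → ℝ)) :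
    HasFDerivAt (fun w : (Fin n → ℝ) × (Fin n → ℝ) => w.2 i)
      ((ContinuousLinearMap.proj (R := ℝ) (φ := fun _ : Fin n => ℝ) i).comp
        (ContinuousLinearMap.snd ℝ (Fin n → ℝ) (Fin n → ℝ))) z :=
  ContinuousLinearMap.hasFDerivAt (𝕜 := ℝ)
    ((ContinuousLinearMap.proj (R := ℝ) (φ := fun _ : Fin n => ℝ) i).comp
        (ContinuousLinearMap.snd ℝ (Fin n → ℝ) (Fin n → ℝ)))

theorem aux_x {n : ℕ} (i : Fin n) (z : (Fin n → ℝ) × (Fin n → ℝ)) :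
    DifferentiableAt ℝ (fun w : (Fin n → ℝ) × (Fin n → ℝ) => ((w.1 i : ℝ) : ℂ)) z ∧
    pdiff i (fun w => ((w.1 i : ℝ) : ℂ)) z = 1 := by
  have h := Complex.ofRealCLM.hasFDerivAt.comp z (aux_X1 i z)
  refine ⟨h.differentiableAt, ?_⟩
  refine (aux_of h).trans ?_
  simp

theorem aux_y {n : ℕ} (i : Fin n) (z : (Fin n → ℝ) × (Fin n → ℝ)) :
    DifferentiableAt ℝ (fun w : (Fin n → ℝ) × (Fin n → ℝ) => ((w.2 i : ℝ) : ℂ)) z ∧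
    pdiff i (fun w => ((w.2 i : ℝ) : ℂ)) z = -1 := by
  have h := Complex.ofRealCLM.hasFDerivAt.comp z (aux_X2 i z)
  refine ⟨h.differentiableAt, ?_⟩
  refine (aux_of h).trans ?_
  simp

theorem aux_P (p : ℕ) {n : ℕ} (x : Fin n → ℝ) :
    ∃ L : (Fin n → ℝ) →L[ℝ] ℝ, HasFDerivAt (Pform p) L x ∧
      ∀ i, L (Pi.single i 1) = 2 * sgn p i * x i := by
  have h : HasFDerivAt (fun y : Fin n → ℝ => ∑ i, sgn p i * y i ^ 2) _ x :=
    HasFDerivAt.fun_sum (u := Finset.univ) fun i _ =>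
      (((ContinuousLinearMap.proj (R := ℝ) (φ := fun _ : Fin n => ℝ) i).hasFDerivAt
        (x := x)).pow 2).const_mul (sgn p i)
  refine ⟨_, h, fun i => ?_⟩
  simp [Pi.single_apply]
  ring

theorem aux_comp1 (p : ℕ) {n : ℕ} (i : Fin n) (F : ℝ → ℂ) (F' : ℂ)
    (z : (Fin n → ℝ) × (Fin n → ℝ)) (hF : HasDerivAt F F' (Pform p z.1)) :
    DifferentiableAt ℝ (fun w : (Fin n → ℝ) × (Fin n → ℝ) => F (Pform p w.1)) z ∧
    pdiff i (fun w => F (Pform p w.1)) z = 2 * sgn p i * z.1 i * F' := by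
  obtain ⟨L, hL, hv⟩ := aux_P p z.1
  have h := hF.hasFDerivAt.comp z (hL.comp z hasFDerivAt_fst)
  refine ⟨h.differentiableAt, ?_⟩
  refine (aux_of h).trans ?_
  simp [hv]

theorem aux_comp2 (p : ℕ) {n : ℕ} (i : Fin n) (F : ℝ → ℂ) (F' : ℂ)
    (z : (Fin n → ℝ) × (Fin n → ℝ)) (hF : HasDerivAt F F' (Pform p z.2)) :
    DifferentiableAt ℝ (fun w : (Fin n → ℝ) × (Fin n → ℝ) => F (Pform p w.2)) z ∧
    pdiff i (fun w => F (Pform p w.2)) z = -(2 * sgn p i * z.2 i * F') := by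
  obtain ⟨L, hL, hv⟩ := aux_P p z.2
  have h := hF.hasFDerivAt.comp z (hL.comp z hasFDerivAt_snd)
  refine ⟨h.differentiableAt, ?_⟩
  refine (aux_of h).trans ?_
  simp [hv]

/-- First-order operator. -/
def auxG (p : ℕ) {n : ℕ} (i : Fin n) (s t : ℂ) (g : (Fin n → ℝ) × (Fin n → ℝ) → ℂ) :
    (Fin n → ℝ) × (Fin n → ℝ) → ℂ := fun w =>
  (Pform p w.1 : ℂ) * ((Pform p w.2 : ℂ) * pdiff i g w)
   + ((2 * s * sgn p i) * ((w.1 i : ℂ) * ((Pform p w.2 : ℂ) * g w))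
   + (-2 * t * sgn p i) * ((w.2 i : ℂ) * ((Pform p w.1 : ℂ) * g w)))

theorem aux_first (p : ℕ) {n : ℕ} (i : Fin n) (s t : ℂ) (ε η : Bool)
    (g : (Fin n → ℝ) × (Fin n → ℝ) → ℂ) (z : (Fin n → ℝ) × (Fin n → ℝ))
    (hg : DifferentiableAt ℝ g z) (hz1 : Pform p z.1 ≠ 0) (hz2 : Pform p z.2 ≠ 0) :
    pdiff i (fun w => sPow ε s (Pform p w.1) * sPow η t (Pform p w.2) * g w) z
      = sPow (!ε) (s - 1) (Pform p z.1) * sPow (!η) (t - 1) (Pform p z.2) *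
        auxG p i s t g z := by
  obtain ⟨d1, e1⟩ := aux_comp1 p i _ _ z (aux_sPow_deriv_s9 ε s _ hz1)
  obtain ⟨d2, e2⟩ := aux_comp2 p i _ _ z (aux_sPow_deriv_s9 η t _ hz2)
  rw [aux_mul_s9 i (d1.fun_mul d2) hg, aux_mul_s9 i d1 d2, e1, e2,
    ← aux_sPow_mul ε s _ hz1, ← aux_sPow_mul η t _ hz2]
  unfold auxG
  ring

theorem aux_ofReal (x : ℝ) : HasDerivAt (fun y : ℝ => (y : ℂ)) 1 x := by
  simpa using (hasDerivAt_id x).ofReal_comp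

theorem aux_G (p : ℕ) {n : ℕ} (i : Fin n) (s t : ℂ)
    (g : (Fin n → ℝ) × (Fin n → ℝ) → ℂ) (z : (Fin n → ℝ) × (Fin n → ℝ))
    (hg : DifferentiableAt ℝ g z) (hg' : DifferentiableAt ℝ (pdiff i g) z) :
    DifferentiableAt ℝ (auxG p i s t g) z ∧
    pdiff i (auxG p i s t g) z =
      ((Pform p z.1 : ℂ) * ((Pform p z.2 : ℂ) * pdiff i (pdiff i g) z
          + -(2 * sgn p i * z.2 i * 1) * pdiff i g z)
        + (2 * sgn p i * z.1 i * 1) * ((Pform p z.2 : ℂ) * pdiff i g z))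
      + ((2 * s * sgn p i) * ((z.1 i : ℂ) * ((Pform p z.2 : ℂ) * pdiff i g z
            + -(2 * sgn p i * z.2 i * 1) * g z) + 1 * ((Pform p z.2 : ℂ) * g z))
      + (-2 * t * sgn p i) * ((z.2 i : ℂ) * ((Pform p z.1 : ℂ) * pdiff i g z
            + (2 * sgn p i * z.1 i * 1) * g z) + (-1) * ((Pform p z.1 : ℂ) * g z))) := by
  obtain ⟨d1, e1⟩ := aux_comp1 p i _ _ z (aux_ofReal _)
  obtain ⟨d2, e2⟩ := aux_comp2 p i _ _ z (aux_ofReal _)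
  obtain ⟨dx, ex⟩ := aux_x i z
  obtain ⟨dy, ey⟩ := aux_y i z
  have c (a : ℂ) : DifferentiableAt ℝ (fun _ : (Fin n → ℝ) × (Fin n → ℝ) => a) z :=
    differentiableAt_const a
  have a1 := d1.fun_mul (d2.fun_mul hg')
  have a2 := dx.fun_mul (d2.fun_mul hg)
  have a3 := dy.fun_mul (d1.fun_mul hg)
  have b2 := (c (2 * s * sgn p i)).fun_mul a2
  have b3 := (c (-2 * t * sgn p i)).fun_mul a3
  refine ⟨a1.add (b2.fun_add b3), ?_⟩
  unfold auxG
  refine (aux_add i a1 (b2.fun_add b3)).trans ?_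
  refine congrArg₂ _ ?_ ((aux_add i b2 b3).trans (congrArg₂ _ ?_ ?_))
  · refine (aux_mul_s9 i d1 (d2.fun_mul hg')).trans ?_
    refine congrArg₂ _ (congrArg _ ((aux_mul_s9 i d2 hg').trans ?_)) ?_
    · rw [e2]
    · rw [e1]
  · refine (aux_mul_s9 i (c _) a2).trans ?_
    rw [aux_const, zero_mul, add_zero]
    refine congrArg _ ((aux_mul_s9 i dx (d2.fun_mul hg)).trans ?_)
    rw [ex]
    refine congrArg₂ _ (congrArg _ ((aux_mul_s9 i d2 hg).trans ?_)) rfl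
    rw [e2]
  · refine (aux_mul_s9 i (c _) a3).trans ?_
    rw [aux_const, zero_mul, add_zero]
    refine congrArg _ ((aux_mul_s9 i dy (d1.fun_mul hg)).trans ?_)
    rw [ey]
    refine congrArg₂ _ (congrArg _ ((aux_mul_s9 i d1 hg).trans ?_)) rfl
    rw [e1]

theorem aux_sgn (p : ℕ) {n : ℕ} (i : Fin n) : (sgn p i : ℂ) * sgn p i = 1 := by
  unfold sgn; split_ifs <;> simp

/-- Main identity for `V = ℝ^{p,q}` with the explicit operator `D_{s,t}` (Theorem 8.2). -/
theorem main_identity_Rpq (p q : ℕ) (hp : 1 ≤ p) (n : ℕ) (hn : n = p + q)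
    (s t : ℂ) (ε η : Bool) (f : (Fin n → ℝ) × (Fin n → ℝ) → ℂ)
    (hf : ContDiff ℝ (⊤ : ℕ∞) f)
    (z : (Fin n → ℝ) × (Fin n → ℝ)) (hz1 : Pform p z.1 ≠ 0) (hz2 : Pform p z.2 ≠ 0) :
    PopDiff p (fun w => sPow ε s (Pform p w.1) * sPow η t (Pform p w.2) * f w) z
      = sPow (!ε) (s - 1) (Pform p z.1) * sPow (!η) (t - 1) (Pform p z.2)
          * Dst p s t f z := by
  have hgd : Differentiable ℝ f := hf.differentiable (by simp)
  have hg' (i : Fin n) : DifferentiableAt ℝ (pdiff i f) z := by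
    have h1 : Differentiable ℝ (fderiv ℝ f) :=
      (hf.fderiv_right (m := 1) (WithTop.coe_le_coe.2 (le_top : ((1 + 1 : ℕ∞)) ≤ ⊤))).differentiable (by simp)
    have h2 : pdiff i f = fun w => fderiv ℝ f w (Pi.single i 1, -Pi.single i 1) :=
      funext fun w => aux_pdiff i f w
    rw [h2]
    exact (h1 z).clm_apply (differentiableAt_const _)
  have hPc : Continuous (Pform p : (Fin n → ℝ) → ℝ) := by
    unfold Pform; fun_prop
  have key (i : Fin n) :
      pdiff i (pdiff i (fun w => sPow ε s (Pform p w.1) * sPow η t (Pform p w.2) * f w)) z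
      = sPow (!!ε) (s - 1 - 1) (Pform p z.1) * sPow (!!η) (t - 1 - 1) (Pform p z.2) *
        auxG p i (s - 1) (t - 1) (auxG p i s t f) z := by
    rw [← aux_first p i (s - 1) (t - 1) (!ε) (!η) _ z (aux_G p i s t f z (hgd z) (hg' i)).1 hz1 hz2]
    have hev : pdiff i (fun w => sPow ε s (Pform p w.1) * sPow η t (Pform p w.2) * f w)
        =ᶠ[nhds z] fun w => sPow (!ε) (s - 1) (Pform p w.1) *
          sPow (!η) (t - 1) (Pform p w.2) * auxG p i s t f w := by
      have o1 : ∀ᶠ w in nhds z, Pform p w.1 ≠ 0 :=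
        (hPc.comp continuous_fst).continuousAt.eventually_ne hz1
      have o2 : ∀ᶠ w in nhds z, Pform p w.2 ≠ 0 :=
        (hPc.comp continuous_snd).continuousAt.eventually_ne hz2
      filter_upwards [o1, o2] with w h1 h2
      exact aux_first p i s t ε η f w (hgd w) h1 h2
    rw [aux_pdiff, aux_pdiff, hev.fderiv_eq]
  have hX : (Pform p z.1 : ℂ) = ∑ i, (sgn p i : ℂ) * (z.1 i : ℂ) ^ 2 := by
    unfold Pform; push_cast; rfl
  have hY : (Pform p z.2 : ℂ) = ∑ i, (sgn p i : ℂ) * (z.2 i : ℂ) ^ 2 := by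
    unfold Pform; push_cast; rfl
  have hB : (Pbil p z.1 z.2 : ℂ) = ∑ i, (sgn p i : ℂ) * (z.1 i : ℂ) * (z.2 i : ℂ) := by
    unfold Pbil; push_cast; rfl
  have hN : (n : ℂ) = ∑ _i : Fin n, (1 : ℂ) := by simp
  have h1 := aux_sPow_mul (!ε) (s - 1) _ hz1
  have h2 := aux_sPow_mul (!η) (t - 1) _ hz2
  rw [← h1, ← h2]
  unfold PopDiff
  simp only [key]
  generalize sPow (!!ε) (s - 1 - 1) (Pform p z.1) = A
  generalize sPow (!!η) (t - 1 - 1) (Pform p z.2) = B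
  unfold Dst PopDiff
  set X : ℂ := (Pform p z.1 : ℂ) with hXd
  set Y : ℂ := (Pform p z.2 : ℂ) with hYd
  have term (i : Fin n) : (sgn p i : ℂ) * (A * B * auxG p i (s - 1) (t - 1) (auxG p i s t f) z)
      = A * B * (X ^ 2 * Y ^ 2 * ((sgn p i : ℂ) * pdiff i (pdiff i f) z)
        + 4 * s * X * Y ^ 2 * ((z.1 i : ℂ) * (pdx i f z - pdy i f z))
        + 4 * t * X ^ 2 * Y * ((z.2 i : ℂ) * (pdy i f z - pdx i f z))
        + (2 * s * X * Y ^ 2 + 2 * t * X ^ 2 * Y) * f z * 1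
        + 4 * s * (s - 1) * Y ^ 2 * f z * ((sgn p i : ℂ) * (z.1 i : ℂ) ^ 2)
        + 4 * t * (t - 1) * X ^ 2 * f z * ((sgn p i : ℂ) * (z.2 i : ℂ) ^ 2)
        - 8 * s * t * X * Y * f z * ((sgn p i : ℂ) * (z.1 i : ℂ) * (z.2 i : ℂ))) := by
    have hd : pdx i f z - pdy i f z = pdiff i f z := rfl
    have hd' : pdy i f z - pdx i f z = - pdiff i f z := by rw [← hd]; ring
    have hs := aux_sgn p i
    rw [hd, hd', auxG, (aux_G p i s t f z (hgd z) (hg' i)).2, auxG]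
    simp only [← hXd, ← hYd]
    generalize (sgn p i : ℂ) = e at *
    generalize pdiff i (pdiff i f) z = u
    generalize pdiff i f z = v
    generalize f z = g
    generalize (z.1 i : ℂ) = a
    generalize (z.2 i : ℂ) = b
    clear_value X Y
    have hs2 : e ^ 2 = 1 := by rw [← hs]; ring
    have hs3 : e ^ 3 = e := by rw [pow_succ, hs2, one_mul]
    ring_nf
    simp only [hs2, hs3]
    ring
  simp only [term, ← Finset.mul_sum, Finset.sum_add_distrib, Finset.sum_sub_distrib]
  rw [← hX, ← hY, ← hB, ← hN]
  ring
end
end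

section
/- Hua's formula for the quadratic form of signature (p,q) (the inversion case of the covariance identity det(g(x)−g(y)) = a(g,x)⁻¹ det(x−y) a(g,y)⁻¹, for V = ℝ^{p,q}): for all x, y ∈ ℝⁿ with P(x) ≠ 0 and P(y) ≠ 0, setting x̌ := (x₁, −x₂, …, −xₙ) and x⁻¹ := P(x)⁻¹ · x̌ (and similarly for y), one has P( −x⁻¹ + y⁻¹ ) = P(x)⁻¹ · P(x − y) · P(y)⁻¹. -/
noncomputable section

/-- `x̌ = (x₁, −x₂, …, −xₙ)`. -/
def checkVec {n : ℕ} (x : Fin n → ℝ) : Fin n → ℝ :=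
  fun i => if (i : ℕ) = 0 then x i else -x i

/-- The Jordan inverse `x⁻¹ = P(x)⁻¹ · x̌` in `ℝ^{p,q}`. -/
def jInv (p : ℕ) {n : ℕ} (x : Fin n → ℝ) : Fin n → ℝ :=
  (Pform p x)⁻¹ • checkVec x

/-- Hua's formula for the quadratic form of signature `(p,q)`:
`P(−x⁻¹ + y⁻¹) = P(x)⁻¹ · P(x−y) · P(y)⁻¹` for invertible `x, y`. -/
theorem hua_formula_Rpq (p q : ℕ) (hp : 1 ≤ p) (n : ℕ) (hn : n = p + q)
    (x y : Fin n → ℝ) (hx : Pform p x ≠ 0) (hy : Pform p y ≠ 0) :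
    Pform p (-jInv p x + jInv p y) = (Pform p x)⁻¹ * Pform p (x - y) * (Pform p y)⁻¹ := by
  have key : ∀ a b : ℝ, ∀ u v : Fin n → ℝ, Pform p (a • u + b • v)
      = a ^ 2 * Pform p u + 2 * a * b * Pbil p u v + b ^ 2 * Pform p v := by
    intro a b u v
    simp only [Pform, Pbil, Finset.mul_sum, ← Finset.sum_add_distrib]
    refine Finset.sum_congr rfl fun i _ => ?_
    simp only [Pi.add_apply, Pi.smul_apply, smul_eq_mul]
    ring
  have hP : ∀ u : Fin n → ℝ, Pform p (checkVec u) = Pform p u := by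
    intro u
    refine Finset.sum_congr rfl fun i _ => ?_
    unfold checkVec
    split_ifs <;> ring
  have hB : Pbil p (checkVec x) (checkVec y) = Pbil p x y := by
    refine Finset.sum_congr rfl fun i _ => ?_
    unfold checkVec
    split_ifs <;> ring
  have h1 : -jInv p x + jInv p y
      = (-(Pform p x)⁻¹) • checkVec x + (Pform p y)⁻¹ • checkVec y := by
    simp [jInv]
  have h2 : x - y = (1 : ℝ) • x + (-1 : ℝ) • y := by
    simp [sub_eq_add_neg]
  rw [h1, h2, key, key, hP, hP, hB]
  field_simp
  ring
end
end

section
/- Stabilizer lemma for the conformal group of ℝ^{p,q} (Lemma 8.7): Let g : W → W be a linear bijection with Q(g w) = Q(w) for all w ∈ W, and let e_{n+1} = (0, 0, 1) ∈ W. Then g maps the line ℝ·e_{n+1} into itself (i.e. g(e_{n+1}) is a nonzero scalar multiple of e_{n+1}) if and only if there exist t ∈ ℝ∖{0}, a linear map h : ℝⁿ → ℝⁿ with P(h v) = P(v) for all v, and a ∈ ℝⁿ, such that g = l_{t,h} ∘ n_a, where n_a(α, v, β) := (α, αa + v, αP(a) + 2P(a,v) + β) and l_{t,h}(α, v, β)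 := (t⁻¹α, h v, tβ). -/
noncomputable section

/-- The quadratic form `Q(α, v, β) = P(v) − αβ` on `W = ℝ × ℝⁿ × ℝ`. -/
def Qform (p : ℕ) {n : ℕ} (w : ℝ × (Fin n → ℝ) × ℝ) : ℝ :=
  Pform p w.2.1 - w.1 * w.2.2

/-- `n_a(α, v, β) = (α, αa + v, αP(a) + 2P(a,v) + β)`. -/
def transMap (p : ℕ) {n : ℕ} (a : Fin n → ℝ) (w : ℝ × (Fin n → ℝ) × ℝ) :
    ℝ × (Fin n → ℝ) × ℝ :=
  (w.1, w.1 • a + w.2.1, w.1 * Pform p a + 2 * Pbil p a w.2.1 + w.2.2)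

/-- `l_{t,h}(α, v, β) = (t⁻¹α, hv, tβ)`. -/
def levMap {n : ℕ} (t : ℝ) (h : (Fin n → ℝ) →ₗ[ℝ] (Fin n → ℝ))
    (w : ℝ × (Fin n → ℝ) × ℝ) : ℝ × (Fin n → ℝ) × ℝ :=
  (t⁻¹ * w.1, h w.2.1, t * w.2.2)

theorem Pform_smul_add (p : ℕ) {n : ℕ} (r : ℝ) (a v : Fin n → ℝ) :
    Pform p (r • a + v) = r ^ 2 * Pform p a + 2 * r * Pbil p a v + Pform p v := by
  simp only [Pform, Pbil, Finset.mul_sum, ← Finset.sum_add_distrib]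
  refine Finset.sum_congr rfl fun i _ => ?_
  simp only [Pi.add_apply, Pi.smul_apply, smul_eq_mul]
  ring

theorem Pbil_zero (p : ℕ) {n : ℕ} (a : Fin n → ℝ) : Pbil p a 0 = 0 := by
  simp [Pbil]

theorem Pbil_zero_left (p : ℕ) {n : ℕ} (a : Fin n → ℝ) : Pbil p 0 a = 0 := by
  simp [Pbil]

theorem Pform_zero (p : ℕ) {n : ℕ} : Pform p (0 : Fin n → ℝ) = 0 := by
  simp [Pform]

/-- Stabilizer lemma for the conformal group of `ℝ^{p,q}` (Lemma 8.7): a linear bijection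
`g` of `W` preserving `Q` maps the line `ℝ·e_{n+1}` into itself iff `g = l_{t,h} ∘ n_a`
for some `t ≠ 0`, some linear `h` with `P∘h = P`, and some `a ∈ ℝⁿ`. -/
theorem stabilizer_lemma_Rpq (p q : ℕ) (hp : 1 ≤ p) (n : ℕ) (hn : n = p + q)
    (g : (ℝ × (Fin n → ℝ) × ℝ) →ₗ[ℝ] (ℝ × (Fin n → ℝ) × ℝ))
    (hbij : Function.Bijective g)
    (hQ : ∀ w, Qform p (g w) = Qform p w) :
    (∃ c : ℝ, c ≠ 0 ∧ g ((0 : ℝ), (0 : Fin n → ℝ), (1 : ℝ))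
        = c • ((0 : ℝ), (0 : Fin n → ℝ), (1 : ℝ)))
    ↔ ∃ t : ℝ, t ≠ 0 ∧ ∃ h : (Fin n → ℝ) →ₗ[ℝ] (Fin n → ℝ),
        (∀ v, Pform p (h v) = Pform p v) ∧
        ∃ a : Fin n → ℝ, ∀ w, g w = levMap t h (transMap p a w) := by
  constructor
  · rintro ⟨c, hc, hg⟩
    have h1 : ∀ w, (g w).1 = c⁻¹ * w.1 := by
      intro w
      have e1 := hQ (w + (0, 0, 1))
      have e2 := hQ w
      rw [map_add, hg] at e1
      simp only [Qform, Prod.fst_add, Prod.snd_add, Prod.smul_fst, Prod.smul_snd, smul_eq_mul,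
        smul_zero, mul_zero, add_zero, mul_one] at e1 e2
      field_simp
      linarith
    let h : (Fin n → ℝ) →ₗ[ℝ] (Fin n → ℝ) :=
      { toFun := fun v => (g (0, v, 0)).2.1
        map_add' := by
          intro x y
          have : ((0 : ℝ), x + y, (0 : ℝ)) = (0, x, 0) + (0, y, 0) := by simp
          rw [this, map_add]; rfl
        map_smul' := by
          intro r x
          have : ((0 : ℝ), r • x, (0 : ℝ)) = r • (0, x, 0) := by simp
          rw [this, map_smul]; rfl }
    have hh : ∀ v, h v = (g (0, v, 0)).2.1 := fun v => rfl
    have hdec : ∀ w : ℝ × (Fin n → ℝ) × ℝ,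
        g w = w.1 • g (1, 0, 0) + g (0, w.2.1, 0) + (w.2.2 * c) • (0, 0, 1) := by
      rintro ⟨α, v, β⟩
      rw [mul_smul, ← hg, ← map_smul, ← map_smul, ← map_add, ← map_add]
      simp
    have hP : ∀ v, Pform p (h v) = Pform p v := by
      intro v
      have e := hQ (0, v, 0)
      simp only [Qform, h1, mul_zero, zero_mul, sub_zero] at e
      exact e
    obtain ⟨w, hw⟩ := hbij.2 (0, (g (1, 0, 0)).2.1, 0)
    have hw1 : w.1 = 0 := by
      have := h1 w
      rw [hw] at this
      simpa [hc] using this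
    have hb : h w.2.1 = (g (1, 0, 0)).2.1 := by
      have := hdec w
      rw [hw, hw1] at this
      have := congrArg (fun z => z.2.1) this
      simp at this
      rw [hh, this]
    set a := w.2.1 with ha
    have key : ∀ v, Pform p a + 2 * Pbil p a v =
        c⁻¹ * ((g (1, 0, 0)).2.2 + (g (0, v, 0)).2.2) := by
      intro v
      have e := hQ (1, v, 0)
      have d := hdec (1, v, 0)
      have d1 : (g (1, v, 0)).2.1 = h ((1 : ℝ) • a + v) := by
        rw [d, map_add, map_smul, hb, hh]; simp
      have d2 : (g (1, v, 0)).2.2 = (g (1, 0, 0)).2.2 + (g (0, v, 0)).2.2 := by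
        rw [d]; simp
      simp only [Qform, h1, d1, d2, hP, Pform_smul_add] at e
      linarith
    have key0 : Pform p a = c⁻¹ * (g (1, 0, 0)).2.2 := by
      have e := key 0
      have z : g ((0 : ℝ), (0 : Fin n → ℝ), (0 : ℝ)) = 0 := map_zero g
      rw [z, Pbil_zero] at e
      simpa using e
    have k1 : (g (1, 0, 0)).2.2 = c * Pform p a := by
      rw [key0]; field_simp
    have k2 : ∀ v, (g (0, v, 0)).2.2 = c * (2 * Pbil p a v) := by
      intro v
      have e := key v
      rw [mul_add, ← key0] at e
      have e' : 2 * Pbil p a v = c⁻¹ * (g (0, v, 0)).2.2 := by linarith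
      rw [e']; field_simp
    refine ⟨c, hc, h, hP, a, fun u => ?_⟩
    refine Prod.ext (h1 u) (Prod.ext ?_ ?_)
    · rw [hdec u]
      simp only [levMap, transMap]
      rw [map_add, map_smul, hb, hh]
      simp
    · rw [hdec u]
      simp only [levMap, transMap, Prod.snd_add, Prod.smul_snd, smul_eq_mul, k1, k2]
      ring
  · rintro ⟨t, ht, h, hP, a, hg⟩
    refine ⟨t, ht, ?_⟩
    rw [hg]
    simp [levMap, transMap, Pbil_zero]
end
end

section
/- Local zeta functional equation for the positive definite case (the case V = ℝ^{n,0} of Theorem 4.1, restricted to the strip where both zeta integrals converge absolutely): Let n ≥ 1, let f : ℝⁿ → ℂ be a Schwartz function, and let s ∈ ℂ with −n/2 < Re(s) < 0. Then both integrals below converge absolutely and ∫_{ℝⁿ} 𝓕f(ξ) · ‖ξ‖^{2s} dξ = π^{−2s−n/2} · ( Γ(s + n/2) / Γ(−s) ) · ∫_{ℝⁿ} f(x) · ‖x‖^{−2s−n} dx, where ‖·‖ is the Euclidean norm. -/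
noncomputable section

open MeasureTheory Real

/-- The Fourier transform `𝓕f(ξ) = ∫ e^{−2πi⟨x,ξ⟩} f(x) dx` on `ℝⁿ`. -/
def fourierTr {n : ℕ} (f : EuclideanSpace ℝ (Fin n) → ℂ) (ξ : EuclideanSpace ℝ (Fin n)) : ℂ :=
  ∫ x, Complex.exp (-2 * Real.pi * Complex.I * ((inner ℝ x ξ : ℝ) : ℂ)) * f x


open Complex in
lemma zfe_integrable (n : ℕ) (hn : 1 ≤ n)
    (f : SchwartzMap (EuclideanSpace ℝ (Fin n)) ℂ) (c : ℂ) (h₁ : -(n : ℝ) < c.re) (h₂ : c.re < 0) :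
    Integrable (fun x : EuclideanSpace ℝ (Fin n) => f x * ((‖x‖ : ℂ) ^ c)) := by
  have : Nonempty (Fin n) := ⟨⟨0, hn⟩⟩
  have hmeas : AEStronglyMeasurable (fun x : EuclideanSpace ℝ (Fin n) => ((‖x‖ : ℂ) ^ c)) volume := by
    apply Measurable.aestronglyMeasurable
    fun_prop
  have hnorm : ∀ x : EuclideanSpace ℝ (Fin n), ‖((‖x‖ : ℂ) ^ c)‖ ≤ ‖x‖ ^ c.re := by
    intro x
    rcases eq_or_ne x 0 with rfl | hx
    · have : c ≠ 0 := by rintro rfl; simp at h₂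
      simp [this]
      positivity
    · rw [norm_cpow_eq_rpow_re_of_pos (norm_pos_iff.mpr hx)]
  rw [← integrableOn_univ, ← Set.union_compl_self (Metric.ball (0 : EuclideanSpace ℝ (Fin n)) 1)]
  apply IntegrableOn.union
  · obtain ⟨C, hC⟩ := f.decay 0 0
    have hb : IntegrableOn (fun x : EuclideanSpace ℝ (Fin n) => ‖x‖ ^ c.re) (Metric.ball 0 1) := by
      rw [integrableOn_fun_norm_addHaar volume (f := fun y : ℝ => y ^ c.re)]
      have : IntegrableOn (fun y : ℝ => y ^ ((n : ℝ) - 1 + c.re)) (Set.Ioo 0 1) := by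
        rw [intervalIntegral.integrableOn_Ioo_rpow_iff zero_lt_one]
        linarith
      refine this.congr_fun ?_ measurableSet_Ioo
      intro y hy
      simp only [finrank_euclideanSpace, Fintype.card_fin, smul_eq_mul]
      rw [Real.rpow_add hy.1, ← Real.rpow_natCast, Nat.cast_sub hn, Nat.cast_one]
    refine Integrable.bdd_mul (c := C) ?_ f.continuous.aestronglyMeasurable ?_
    · refine Integrable.mono' hb hmeas.restrict ?_
      filter_upwards with x using hnorm x
    · filter_upwards with x
      simpa using hC.2 x
  · refine Integrable.mul_bdd (c := 1) f.integrable.integrableOn hmeas.restrict ?_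
    filter_upwards [ae_restrict_mem measurableSet_ball.compl] with x hx
    refine (hnorm x).trans ?_
    apply Real.rpow_le_one_of_one_le_of_nonpos _ h₂.le
    simpa using hx

/-- Gaussian pairing. -/
def zfePhi {n : ℕ} (f : EuclideanSpace ℝ (Fin n) → ℂ) (t : ℝ) : ℂ :=
  ∫ x, f x * Complex.exp (-(((π * ‖x‖ ^ 2 : ℝ) : ℂ) * t))

open Complex in
lemma zfe_mellin (n : ℕ) (hn : 1 ≤ n)
    (f : SchwartzMap (EuclideanSpace ℝ (Fin n)) ℂ) (a : ℂ) (h₁ : 0 < a.re) (h₂ : a.re < n / 2) :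
    mellin (zfePhi f) a = Complex.Gamma a * (π : ℂ) ^ (-a) *
      ∫ x : EuclideanSpace ℝ (Fin n), f x * ((‖x‖ : ℂ) ^ (-2 * a)) := by
  have : Nonempty (Fin n) := ⟨⟨0, hn⟩⟩
  have hx0 : ∀ᵐ x : EuclideanSpace ℝ (Fin n), x ≠ 0 := by
    simp [ae_iff]
  have hpw : ∀ x : EuclideanSpace ℝ (Fin n), x ≠ 0 →
      (1 / ((π * ‖x‖ ^ 2 : ℝ) : ℂ)) ^ a = (π : ℂ) ^ (-a) * (‖x‖ : ℂ) ^ (-2 * a) := by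
    intro x hx
    have hx' := norm_pos_iff.mpr hx
    rw [← ofReal_one, ← ofReal_div]
    rw [cpow_def_of_ne_zero (by norm_cast; positivity),
      cpow_def_of_ne_zero (by norm_cast; positivity),
      cpow_def_of_ne_zero (by norm_cast; positivity), ← Complex.exp_add,
      ← ofReal_log (by positivity), ← ofReal_log (by positivity), ← ofReal_log (by positivity)]
    rw [one_div, Real.log_inv, Real.log_mul (by positivity) (by positivity), Real.log_pow]
    push_cast
    ring_nf
  have hint : Integrable (Function.uncurry fun (t : ℝ) (x : EuclideanSpace ℝ (Fin n)) =>
      (t : ℂ) ^ (a - 1) * (f x * Complex.exp (-(((π * ‖x‖ ^ 2 : ℝ) : ℂ) * t))))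
      ((volume.restrict (Set.Ioi (0 : ℝ))).prod volume) := by
    rw [integrable_prod_iff']
    · constructor
      · filter_upwards [hx0] with x hx
        have hx' := norm_pos_iff.mpr hx
        simp only [Function.uncurry_apply_pair]
        by_contra hcon
        have := integral_cpow_mul_exp_neg_mul_Ioi h₁ (r := π * ‖x‖ ^ 2) (by positivity)
        have hni : ¬ Integrable (fun t : ℝ => (t : ℂ) ^ (a - 1) *
            Complex.exp (-(((π * ‖x‖ ^ 2 : ℝ) : ℂ) * t))) (volume.restrict (Set.Ioi (0 : ℝ))) := by
          intro h
          apply hcon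
          refine (h.const_mul (f x)).congr ?_
          filter_upwards with t
          ring
        rw [integral_undef hni] at this
        rw [hpw x hx] at this
        have hpi : (π : ℂ) ≠ 0 := by exact_mod_cast pi_pos.ne'
        simp [Complex.Gamma_ne_zero_of_re_pos h₁, cpow_eq_zero_iff, hx, hpi] at this
      · have h3 := ((zfe_integrable n hn f (-2 * a.re : ℝ) (by simp; linarith)
          (by simp; linarith)).norm).const_mul (π ^ (-a.re) * Real.Gamma a.re)
        refine h3.congr ?_
        filter_upwards [hx0] with x hx
        have hx' := norm_pos_iff.mpr hx
        have h4 := Real.integral_rpow_mul_exp_neg_mul_Ioi h₁ (r := π * ‖x‖ ^ 2) (by positivity)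
        have h5 : ∫ t : ℝ in Set.Ioi 0, ‖(t : ℂ) ^ (a - 1) * (f x *
            Complex.exp (-(((π * ‖x‖ ^ 2 : ℝ) : ℂ) * t)))‖
            = ∫ t : ℝ in Set.Ioi 0, ‖f x‖ * (t ^ (a.re - 1) * Real.exp (-(π * ‖x‖ ^ 2 * t))) := by
          refine setIntegral_congr_fun measurableSet_Ioi fun t ht => ?_
          simp only [norm_mul]
          rw [norm_cpow_eq_rpow_re_of_pos ht, ← ofReal_mul, ← ofReal_neg, norm_exp_ofReal]
          simp
          ring
        simp only [Function.uncurry_apply_pair]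
        rw [h5, integral_const_mul, h4, norm_mul, norm_cpow_eq_rpow_re_of_pos hx', ofReal_re,
          one_div, Real.inv_rpow (by positivity), Real.mul_rpow (by positivity) (by positivity),
          ← Real.rpow_natCast, ← Real.rpow_mul (by positivity), mul_inv,
          ← Real.rpow_neg (by positivity), ← Real.rpow_neg (by positivity)]
        push_cast
        ring_nf
    · have := f.continuous.measurable
      apply Measurable.aestronglyMeasurable
      unfold Function.uncurry
      fun_prop
  calc mellin (zfePhi f) a = ∫ t : ℝ in Set.Ioi 0, ∫ x : EuclideanSpace ℝ (Fin n),
        (t : ℂ) ^ (a - 1) * (f x * Complex.exp (-(((π * ‖x‖ ^ 2 : ℝ) : ℂ) * t))) := by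
        simp only [mellin, zfePhi, smul_eq_mul, integral_const_mul]
    _ = ∫ x : EuclideanSpace ℝ (Fin n), ∫ t : ℝ in Set.Ioi 0,
        (t : ℂ) ^ (a - 1) * (f x * Complex.exp (-(((π * ‖x‖ ^ 2 : ℝ) : ℂ) * t))) :=
        integral_integral_swap hint
    _ = ∫ x : EuclideanSpace ℝ (Fin n), Complex.Gamma a * (π : ℂ) ^ (-a) *
        (f x * ((‖x‖ : ℂ) ^ (-2 * a))) := by
        refine integral_congr_ae ?_
        filter_upwards [hx0] with x hx
        have hx' := norm_pos_iff.mpr hx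
        have h4 := integral_cpow_mul_exp_neg_mul_Ioi h₁ (r := π * ‖x‖ ^ 2) (by positivity)
        rw [hpw x hx] at h4
        calc _ = ∫ t : ℝ in Set.Ioi 0, f x * ((t : ℂ) ^ (a - 1) *
              Complex.exp (-(((π * ‖x‖ ^ 2 : ℝ) : ℂ) * t))) := by
              congr 1; ext t; ring
          _ = _ := by
              rw [integral_const_mul, h4]; ring
    _ = _ := integral_const_mul _ _

open Complex FourierTransform in
lemma zfe_phi_fourier (n : ℕ) (f : SchwartzMap (EuclideanSpace ℝ (Fin n)) ℂ) (t : ℝ) (ht : 0 < t) :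
    zfePhi (𝓕 f : SchwartzMap (EuclideanSpace ℝ (Fin n)) ℂ) t = (t : ℂ) ^ (-(n / 2 : ℂ)) • zfePhi f t⁻¹ := by
  have hb : 0 < ((π * t : ℝ) : ℂ).re := by rw [ofReal_re]; positivity
  have hg : Integrable (fun v : EuclideanSpace ℝ (Fin n) =>
      cexp (-((π * t : ℝ) : ℂ) * ‖v‖ ^ 2)) := by
    simpa using GaussianFourier.integrable_cexp_neg_mul_sq_norm_add hb 0
      (0 : EuclideanSpace ℝ (Fin n))
  have key : ∫ ξ, (𝓕 (f : EuclideanSpace ℝ (Fin n) → ℂ) ξ) • cexp (-((π * t : ℝ) : ℂ) * ‖ξ‖ ^ 2)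
      = ∫ x, f x • 𝓕 (fun v : EuclideanSpace ℝ (Fin n) => cexp (-((π * t : ℝ) : ℂ) * ‖v‖ ^ 2)) x := by
    simpa using! VectorFourier.integral_fourierIntegral_smul_eq_flip (L := innerₗ _)
      continuous_fourierChar continuous_inner f.integrable hg
  unfold zfePhi
  rw [smul_eq_mul, ← integral_const_mul]
  trans ∫ ξ, (𝓕 (f : EuclideanSpace ℝ (Fin n) → ℂ) ξ) • cexp (-((π * t : ℝ) : ℂ) * ‖ξ‖ ^ 2)
  · congr 1; ext x
    rw [SchwartzMap.fourier_coe, smul_eq_mul]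
    congr 2
    push_cast
    ring
  · rw [key]
    congr 1; ext x
    rw [fourier_gaussian_innerProductSpace hb, smul_eq_mul]
    have hpi : (π : ℂ) ≠ 0 := by norm_cast; positivity
    have ht' : (t : ℂ) ≠ 0 := by norm_cast; positivity
    have e1 : ((π : ℂ) / ((π * t : ℝ) : ℂ)) = (t : ℂ)⁻¹ := by
      push_cast; field_simp
    rw [e1, finrank_euclideanSpace, Fintype.card_fin, inv_cpow _ _ (by
      rw [arg_ofReal_of_nonneg ht.le]; exact pi_pos.ne), ← cpow_neg]
    have e2 : -(π : ℂ) ^ 2 * (‖x‖ : ℂ) ^ 2 / ((π * t : ℝ) : ℂ)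
        = -(((π * ‖x‖ ^ 2 : ℝ) : ℂ) * (t⁻¹ : ℝ)) := by
      push_cast; field_simp
    rw [e2]
    ring

open FourierTransform in
lemma fourierTr_eq_fourier {n : ℕ} (f : SchwartzMap (EuclideanSpace ℝ (Fin n)) ℂ)
    (ξ : EuclideanSpace ℝ (Fin n)) : fourierTr (fun x => f x) ξ = (𝓕 f) ξ := by
  rw [SchwartzMap.fourier_coe, Real.fourier_eq']
  unfold fourierTr
  congr 1; ext x
  rw [smul_eq_mul]
  congr 2
  push_cast
  ring

/-- Local zeta functional equation for the positive definite case `V = ℝ^{n,0}`: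
for a Schwartz function `f` and `−n/2 < Re s < 0`, both zeta integrals converge
absolutely and
`∫ 𝓕f(ξ)‖ξ‖^{2s} dξ = π^{−2s−n/2} (Γ(s+n/2)/Γ(−s)) ∫ f(x)‖x‖^{−2s−n} dx`. -/
theorem zeta_functional_equation_euclidean (n : ℕ) (hn : 1 ≤ n)
    (f : SchwartzMap (EuclideanSpace ℝ (Fin n)) ℂ) (s : ℂ)
    (h₁ : -(n / 2 : ℝ) < s.re) (h₂ : s.re < 0) :
    Integrable (fun ξ : EuclideanSpace ℝ (Fin n) =>
        fourierTr (fun x => f x) ξ * ((‖ξ‖ : ℂ) ^ (2 * s)))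
    ∧ Integrable (fun x : EuclideanSpace ℝ (Fin n) =>
        f x * ((‖x‖ : ℂ) ^ (-2 * s - n)))
    ∧ (∫ ξ : EuclideanSpace ℝ (Fin n), fourierTr (fun x => f x) ξ * ((‖ξ‖ : ℂ) ^ (2 * s)))
      = (Real.pi : ℂ) ^ (-2 * s - n / 2)
          * (Complex.Gamma (s + n / 2) / Complex.Gamma (-s))
          * ∫ x : EuclideanSpace ℝ (Fin n), f x * ((‖x‖ : ℂ) ^ (-2 * s - n)) := by
  simp only [fourierTr_eq_fourier]
  have i1 := zfe_integrable n hn (FourierTransform.fourier f) (2 * s) (by simp; linarith) (by simp; linarith)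
  have i2 := zfe_integrable n hn f (-2 * s - n) (by simp; linarith) (by simp; linarith)
  refine ⟨i1, i2, ?_⟩
  have m1 := zfe_mellin n hn (FourierTransform.fourier f) (-s) (by simpa using h₂) (by simp; linarith)
  have hre : (s + n / 2).re = s.re + n / 2 := by
    have : ((n : ℂ) / 2) = ((n / 2 : ℝ) : ℂ) := by push_cast; rfl
    rw [this, Complex.add_re, Complex.ofReal_re]
  have m2 := zfe_mellin n hn f (s + n / 2) (by rw [hre]; linarith) (by rw [hre]; linarith)
  have hm : mellin (zfePhi (FourierTransform.fourier f : SchwartzMap (EuclideanSpace ℝ (Fin n)) ℂ)) (-s)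
      = mellin (zfePhi f) (s + n / 2) := by
    trans mellin (fun t : ℝ => (t : ℂ) ^ (-(n / 2 : ℂ)) • zfePhi f t⁻¹) (-s)
    · refine setIntegral_congr_fun measurableSet_Ioi fun t ht => ?_
      simp only [zfe_phi_fourier n f t ht]
    · rw [mellin_cpow_smul, mellin_comp_inv]
      congr 1; ring
  rw [hm, m2] at m1
  have e1 : -2 * (s + n / 2) = -2 * s - n := by ring
  have e2 : -2 * -s = 2 * s := by ring
  rw [e1, e2, neg_neg] at m1
  have hG : Complex.Gamma (-s) ≠ 0 := Complex.Gamma_ne_zero_of_re_pos (by simpa using h₂)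
  have hpi : (π : ℂ) ≠ 0 := by exact_mod_cast pi_pos.ne'
  have hps : (π : ℂ) ^ s ≠ 0 := by simp [Complex.cpow_eq_zero_iff, hpi]
  have e3 : (π : ℂ) ^ (-(s + n / 2)) = (π : ℂ) ^ (-2 * s - n / 2) * (π : ℂ) ^ s := by
    rw [← Complex.cpow_add _ _ hpi]; congr 1; ring
  rw [e3] at m1
  apply mul_left_cancel₀ (mul_ne_zero hG hps)
  rw [← m1]
  field_simp
end
end

section
/- Invariance of the rank under complexification (Proposition B.1): Let 𝕍 be a nonzero finite-dimensional complex vector space endowed with a ℂ-bilinear commutative multiplication (x,y) ↦ x∘y which has a unit element e (e∘x = x for all x) and satisfies the Jordan identity (x∘y)∘(x∘x) = x∘(y∘(x∘x)) for all x, y. Let V ⊆ 𝕍 be a real subspace with e ∈ V, closed under the multiplication (V∘V ⊆ V), and such that every z ∈ 𝕍 can be written uniquely as z = x + i·y with x, y ∈ V (V is a real form of 𝕍). Define powers by x⁰ = e and x^{k+1} = x∘x^k. For x ∈ V let rk_ℝ(x) = min{ k ≥ 1 : e, x, x², …, x^k are linearly dependent over ℝ }, and for z ∈ 𝕍 let rk_ℂ(z)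 = min{ k ≥ 1 : e, z, z², …, z^k are linearly dependent over ℂ }. Then max_{x ∈ V} rk_ℝ(x) = max_{z ∈ 𝕍} rk_ℂ(z). -/
noncomputable section

/-- Jordan powers: `x⁰ = e`, `x^{k+1} = x ∘ x^k`. -/
def jpow {𝕍 : Type*} [AddCommGroup 𝕍] [Module ℂ 𝕍]
    (m : 𝕍 →ₗ[ℂ] 𝕍 →ₗ[ℂ] 𝕍) (e : 𝕍) (x : 𝕍) : ℕ → 𝕍
  | 0 => e
  | k + 1 => m x (jpow m e x k)

/-- The rank of an element over a field `𝕜`: the least `k ≥ 1` such that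
`e, x, x², …, x^k` are linearly dependent over `𝕜`. -/
def elemRank (𝕜 : Type*) [Field 𝕜] {𝕍 : Type*} [AddCommGroup 𝕍] [Module ℂ 𝕍] [Module 𝕜 𝕍]
    (m : 𝕍 →ₗ[ℂ] 𝕍 →ₗ[ℂ] 𝕍) (e : 𝕍) (x : 𝕍) : ℕ :=
  sInf {k : ℕ | 1 ≤ k ∧ ¬ LinearIndependent 𝕜 (fun i : Fin (k + 1) => jpow m e x (i : ℕ))}

section helpers

variable {𝕍 : Type*} [AddCommGroup 𝕍] [Module ℂ 𝕍]

lemma rk_set_nonempty (𝕜 : Type*) [Field 𝕜] [Module 𝕜 𝕍] [FiniteDimensional 𝕜 𝕍]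
    (m : 𝕍 →ₗ[ℂ] 𝕍 →ₗ[ℂ] 𝕍) (e x : 𝕍) :
    {k : ℕ | 1 ≤ k ∧ ¬ LinearIndependent 𝕜
      (fun i : Fin (k + 1) => jpow m e x (i : ℕ))}.Nonempty := by
  refine ⟨Module.finrank 𝕜 𝕍 + 1, by omega, fun h => ?_⟩
  have := h.fintype_card_le_finrank
  simp at this

lemma le_rk (𝕜 : Type*) [Field 𝕜] [Module 𝕜 𝕍] [FiniteDimensional 𝕜 𝕍]
    (m : 𝕍 →ₗ[ℂ] 𝕍 →ₗ[ℂ] 𝕍) (e x : 𝕍) (n : ℕ)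
    (h : LinearIndependent 𝕜 (fun i : Fin n => jpow m e x (i : ℕ))) :
    n ≤ elemRank 𝕜 m e x := by
  unfold elemRank
  refine le_csInf (rk_set_nonempty 𝕜 m e x) ?_
  rintro k ⟨_, hk⟩
  by_contra hlt
  push Not at hlt
  exact hk (h.comp (Fin.castLE hlt) (Fin.castLE_injective hlt))

lemma rk_indep (𝕜 : Type*) [Field 𝕜] [Module 𝕜 𝕍]
    (m : 𝕍 →ₗ[ℂ] 𝕍 →ₗ[ℂ] 𝕍) (e x : 𝕍) (he : e ≠ 0) :
    LinearIndependent 𝕜 (fun i : Fin (elemRank 𝕜 m e x) => jpow m e x (i : ℕ)) := by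
  rcases hr : elemRank 𝕜 m e x with _ | r
  · exact linearIndependent_empty_type
  · rcases r with _ | r
    · haveI : Subsingleton (Fin (0 + 1)) := inferInstanceAs (Subsingleton (Fin 1))
      refine LinearIndependent.of_subsingleton (0 : Fin (0 + 1)) ?_
      simpa [jpow] using he
    · have h : r + 1 < elemRank 𝕜 m e x := by omega
      have := Nat.notMem_of_lt_sInf h
      by_contra h2
      exact this ⟨by omega, h2⟩

lemma jpow_poly (m : 𝕍 →ₗ[ℂ] 𝕍 →ₗ[ℂ] 𝕍) (e x y : 𝕍) (k : ℕ) :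
    ∀ f : 𝕍 →ₗ[ℂ] ℂ, ∃ p : Polynomial ℂ, ∀ t : ℂ,
      f (jpow m e (x + t • y) k) = p.eval t := by
  induction k with
  | zero => exact fun f => ⟨Polynomial.C (f e), fun t => by simp [jpow]⟩
  | succ k ih =>
    intro f
    obtain ⟨p, hp⟩ := ih (f ∘ₗ m x)
    obtain ⟨q, hq⟩ := ih (f ∘ₗ m y)
    refine ⟨p + Polynomial.X * q, fun t => ?_⟩
    have h1 := hp t
    have h2 := hq t
    simp only [LinearMap.comp_apply] at h1 h2
    rw [Polynomial.eval_add, Polynomial.eval_mul, Polynomial.eval_X, ← h1, ← h2]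
    conv_lhs => rw [jpow]
    simp

lemma exists_real_indep (m : 𝕍 →ₗ[ℂ] 𝕍 →ₗ[ℂ] 𝕍) (e x y : 𝕍) (n : ℕ) (t₀ : ℂ)
    (h : LinearIndependent ℂ (fun i : Fin n => jpow m e (x + t₀ • y) (i : ℕ))) :
    ∃ t : ℝ, LinearIndependent ℂ (fun i : Fin n => jpow m e (x + (t : ℂ) • y) (i : ℕ)) := by
  obtain ⟨g, hg⟩ := LinearMap.exists_leftInverse_of_injective
    (Fintype.linearCombination ℂ (fun i : Fin n => jpow m e (x + t₀ • y) (i : ℕ)))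
    (LinearMap.ker_eq_bot.2 h.fintypeLinearCombination_injective)
  have hgv : ∀ i : Fin n, g (jpow m e (x + t₀ • y) (i : ℕ)) = Pi.single i 1 := by
    intro i
    have := LinearMap.congr_fun hg (Pi.single i 1)
    simpa using this
  choose p hp using fun (j i : Fin n) => jpow_poly m e x y (j : ℕ) (LinearMap.proj i ∘ₗ g)
  have hdet : ∀ t : ℂ, (Matrix.of p).det.eval t
      = (Matrix.of fun j : Fin n => g (jpow m e (x + t • y) (j : ℕ))).det := by
    intro t
    rw [← Polynomial.coe_evalRingHom, RingHom.map_det]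
    congr 1
    ext j i
    simpa using (hp j i t).symm
  have hne : (Matrix.of p).det ≠ 0 := by
    intro h0
    have h1 := hdet t₀
    have h2 : (Matrix.of fun j : Fin n => g (jpow m e (x + t₀ • y) (j : ℕ))) = 1 := by
      ext j i
      simp [hgv, Matrix.one_apply, Pi.single_apply, eq_comm]
    rw [h0, h2] at h1
    simp at h1
  have : ∃ t : ℝ, (Matrix.of p).det.eval (t : ℂ) ≠ 0 := by
    by_contra hall
    push Not at hall
    refine hne (Polynomial.eq_zero_of_infinite_isRoot _ ?_)
    refine (Set.infinite_range_of_injective Complex.ofReal_injective).mono ?_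
    rintro _ ⟨t, rfl⟩
    exact hall t
  obtain ⟨t, ht⟩ := this
  refine ⟨t, LinearIndependent.of_comp g ?_⟩
  rw [hdet] at ht
  have := Matrix.linearIndependent_rows_iff_isUnit.2
    ((Matrix.isUnit_iff_isUnit_det _).2 (isUnit_iff_ne_zero.2 ht))
  exact this

lemma indep_complex (V : Submodule ℝ 𝕍)
    (hrealform : ∀ z : 𝕍, ∃! xy : V × V, z = (xy.1 : 𝕍) + Complex.I • (xy.2 : 𝕍))
    (n : ℕ) (v : Fin n → 𝕍) (hv : ∀ i, v i ∈ V) (h : LinearIndependent ℝ v) :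
    LinearIndependent ℂ v := by
  rw [Fintype.linearIndependent_iff] at h ⊢
  intro c hc
  let a : V := ⟨∑ i, (c i).re • v i, V.sum_mem fun i _ => V.smul_mem _ (hv i)⟩
  let b : V := ⟨∑ i, (c i).im • v i, V.sum_mem fun i _ => V.smul_mem _ (hv i)⟩
  have hab : (0 : 𝕍) = (a : 𝕍) + Complex.I • (b : 𝕍) := by
    rw [← hc]
    simp only [a, b, Finset.smul_sum, ← Finset.sum_add_distrib]
    refine Finset.sum_congr rfl fun i _ => ?_
    conv_lhs => rw [← Complex.re_add_im (c i)]
    rw [add_smul, mul_comm, mul_smul, Complex.coe_smul, Complex.coe_smul]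
  have := (hrealform 0).unique (y₁ := (a, b)) (y₂ := (0, 0)) hab (by simp)
  obtain ⟨ha, hb⟩ := Prod.ext_iff.1 this
  have ha' := h (fun i => (c i).re) (congrArg Subtype.val ha)
  have hb' := h (fun i => (c i).im) (congrArg Subtype.val hb)
  exact fun i => Complex.ext (ha' i) (hb' i)

end helpers

/-- Invariance of the rank under complexification (Proposition B.1): if `V` is a real
form of a finite-dimensional unital complex Jordan algebra `𝕍`, then
`max_{x∈V} rk_ℝ(x) = max_{z∈𝕍} rk_ℂ(z)`. -/
theorem rank_invariance_complexification
    (𝕍 : Type*) [AddCommGroup 𝕍] [Module ℂ 𝕍] [FiniteDimensional ℂ 𝕍] [Nontrivial 𝕍]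
    (m : 𝕍 →ₗ[ℂ] 𝕍 →ₗ[ℂ] 𝕍) (e : 𝕍)
    (hcomm : ∀ x y : 𝕍, m x y = m y x)
    (hunit : ∀ x : 𝕍, m e x = x)
    (hjordan : ∀ x y : 𝕍, m (m x y) (m x x) = m x (m y (m x x)))
    (V : Submodule ℝ 𝕍)
    (heV : e ∈ V)
    (hmul : ∀ x ∈ V, ∀ y ∈ V, m x y ∈ V)
    (hrealform : ∀ z : 𝕍, ∃! xy : V × V, z = (xy.1 : 𝕍) + Complex.I • (xy.2 : 𝕍)) :
    sSup {k : ℕ | ∃ x ∈ V, k = elemRank ℝ m e x}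
      = sSup {k : ℕ | ∃ z : 𝕍, k = elemRank ℂ m e z} := by
  have he : e ≠ 0 := by
    rintro rfl
    obtain ⟨x, hx⟩ := exists_ne (0 : 𝕍)
    exact hx (by simpa using (hunit x).symm)
  haveI : FiniteDimensional ℝ 𝕍 := FiniteDimensional.complexToReal 𝕍
  have hpow : ∀ x ∈ V, ∀ k, jpow m e x k ∈ V := by
    intro x hx k
    induction k with
    | zero => exact heV
    | succ k ih => exact hmul x hx _ ih
  have hbC : BddAbove {k : ℕ | ∃ z : 𝕍, k = elemRank ℂ m e z} := by
    refine ⟨Module.finrank ℂ 𝕍, ?_⟩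
    rintro _ ⟨z, rfl⟩
    simpa using (rk_indep ℂ m e z he).fintype_card_le_finrank
  have hbR : BddAbove {k : ℕ | ∃ x ∈ V, k = elemRank ℝ m e x} := by
    refine ⟨Module.finrank ℝ 𝕍, ?_⟩
    rintro _ ⟨z, _, rfl⟩
    simpa using (rk_indep ℝ m e z he).fintype_card_le_finrank
  apply le_antisymm
  · refine csSup_le ⟨_, e, heV, rfl⟩ ?_
    rintro _ ⟨x, hx, rfl⟩
    refine le_trans ?_ (le_csSup hbC ⟨x, rfl⟩)
    exact le_rk ℂ m e x _
      (indep_complex V hrealform _ _ (fun i => hpow x hx _) (rk_indep ℝ m e x he))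
  · refine csSup_le ⟨_, e, rfl⟩ ?_
    rintro _ ⟨z, rfl⟩
    obtain ⟨⟨x, y⟩, hz, _⟩ := hrealform z
    have h := rk_indep ℂ m e z he
    generalize elemRank ℂ m e z = n at h ⊢
    subst hz
    obtain ⟨t, ht⟩ := exists_real_indep m e x y n Complex.I h
    have hmem : (x : 𝕍) + (t : ℂ) • (y : 𝕍) ∈ V := by
      rw [Complex.coe_smul]
      exact V.add_mem x.2 (V.smul_mem t y.2)
    refine le_trans ?_ (le_csSup hbR ⟨_, hmem, rfl⟩)
    exact le_rk ℝ m e _ _ (ht.restrict_scalars' ℝ)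
end
end
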